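/- There exists an absolute constant c > 0 such that for every natural number n ≥ 2 there is a constant C > 0 with the following property: for every finite field F, writing q = |F| and G = SL_n(F), the number of ordered pairs (x₁, x₂) ∈ G × G such that {x₁, x₂} invariably generates G is at least (c/n − C/q) · |G|². -/

import Mathlib

/-- `{x, y}` invariably generates `G`: for all `g, h`, the conjugates
`g * x * g⁻¹` and `h * y * h⁻¹` generate `G`. -/
def InvGen {G : Type*} [Group G] (x y : G) : Prop :=
  ∀ g h : G, Subgroup.closure {g * x * g⁻¹, h * y * h⁻¹} = ⊤


lemma aux_pow_two (k : ℕ) : ∃ c : ℕ, 1 ≤ c ∧ ∀ a : ℕ, (a + 1) ^ k ≤ c * 2 ^ a := by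
  have h := tendsto_pow_const_div_const_pow_of_one_lt k (r := (2:ℝ)) (by norm_num)
  obtain ⟨B, hB⟩ := h.bddAbove_range
  refine ⟨⌈2 * B⌉₊ + 1, by omega, fun a => ?_⟩
  have h1 : ((a + 1 : ℕ) : ℝ) ^ k / 2 ^ (a + 1) ≤ B := hB ⟨a + 1, rfl⟩
  rw [div_le_iff₀ (by positivity)] at h1
  have h2 : (2 * B) ≤ ((⌈2 * B⌉₊ + 1 : ℕ) : ℝ) := by
    push_cast; linarith [Nat.le_ceil (2 * B)]
  have h3 : (((a + 1) ^ k : ℕ) : ℝ) ≤ (((⌈2 * B⌉₊ + 1) * 2 ^ a : ℕ) : ℝ) := by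
    push_cast at h1 h2 ⊢
    calc _ ≤ _ := h1
      _ = (2 * B) * 2 ^ a := by ring
      _ ≤ _ := by gcongr
  exact_mod_cast h3

lemma divisor_bound (k : ℕ) : ∃ C : ℕ, 1 ≤ C ∧ ∀ m : ℕ, m ≠ 0 → m.divisors.card ^ k ≤ C * m := by
  obtain ⟨c, hc1, hc⟩ := aux_pow_two k
  refine ⟨c ^ (2 ^ k), Nat.one_le_pow _ _ hc1, fun m hm => ?_⟩
  rw [Nat.card_divisors hm, ← Finset.prod_pow]
  have key : ∀ p ∈ m.primeFactors, (m.factorization p + 1) ^ k ≤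
      (if p < 2 ^ k then c else 1) * p ^ (m.factorization p) := by
    intro p hp
    have hp2 : 2 ≤ p := (Nat.prime_of_mem_primeFactors hp).two_le
    split_ifs with h
    · exact (hc _).trans (Nat.mul_le_mul_left _ (Nat.pow_le_pow_left hp2 _))
    · rw [one_mul]
      calc (m.factorization p + 1) ^ k ≤ (2 ^ (m.factorization p)) ^ k :=
            Nat.pow_le_pow_left (Nat.lt_two_pow_self) _
        _ = (2 ^ k) ^ (m.factorization p) := by rw [← pow_mul, ← pow_mul, mul_comm]
        _ ≤ _ := Nat.pow_le_pow_left (by omega) _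
  calc _ ≤ ∏ p ∈ m.primeFactors, ((if p < 2 ^ k then c else 1) * p ^ (m.factorization p)) :=
        Finset.prod_le_prod' key
    _ = (∏ p ∈ m.primeFactors, (if p < 2 ^ k then c else 1)) * m := by
        rw [Finset.prod_mul_distrib]
        congr 1
        exact Nat.prod_factorization_pow_eq_self hm
    _ ≤ _ := by
        gcongr
        rw [← Finset.prod_filter, Finset.prod_const]
        apply Nat.pow_le_pow_right hc1
        calc _ ≤ (Finset.range (2 ^ k)).card := by
              apply Finset.card_le_card
              intro p hp
              simp at hp ⊢
              exact hp.2
          _ = _ := by simp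
open Matrix

lemma subring_eq_top_of_card {F : Type*} [Field F] [Fintype F] (B : Subring F)
    (h : Fintype.card F < (Nat.card B) ^ 2) : ∀ c : F, c ∈ B := by
  intro c
  classical
  have hinv : ∀ b : F, b ∈ B → b⁻¹ ∈ B := by
    intro b hb
    by_cases h0 : b = 0
    · simp [h0]
    have h1 : b⁻¹ = b ^ (Fintype.card F - 2) := by
      have h2 := FiniteField.pow_card_sub_one_eq_one b h0
      have h3 : 2 ≤ Fintype.card F := Fintype.one_lt_card
      rw [inv_eq_of_mul_eq_one_right]
      rw [← pow_succ', show Fintype.card F - 2 + 1 = Fintype.card F - 1 by omega, h2]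
    rw [h1]
    exact pow_mem hb _
  have hni : ¬ Function.Injective (fun p : B × B => (p.1 : F) + c * p.2) := by
    intro hi
    have := Nat.card_le_card_of_injective _ hi
    rw [Nat.card_prod, Nat.card_eq_fintype_card (α := F)] at this
    nlinarith
  rw [Function.Injective] at hni
  push Not at hni
  obtain ⟨⟨a, b⟩, ⟨a', b'⟩, h1, h2⟩ := hni
  simp only at h1
  by_cases hb : (b : F) = b'
  · exfalso
    apply h2
    rw [hb] at h1
    have := add_right_cancel h1
    ext <;> simp [this, hb]
  · have hb' : (b' : F) - b ≠ 0 := fun h => hb (sub_eq_zero.1 h).symm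
    have : c = ((a : F) - a') * ((b' : F) - b)⁻¹ := by
      field_simp
      linear_combination -h1
    rw [this]
    exact B.mul_mem (B.sub_mem a.2 a'.2) (hinv _ (B.sub_mem b'.2 b.2))

lemma card_comap_mul_index {A G : Type*} [Group A] [Group G] [Finite A] [Finite G]
    (φ : A →* G) (H : Subgroup G) : Nat.card A ≤ Nat.card (H.comap φ) * H.index := by
  rw [← Subgroup.card_mul_index (H.comap φ)]
  gcongr
  rw [Subgroup.index_comap]
  rw [← Subgroup.relIndex_top_right]
  exact Subgroup.relIndex_le_of_le_right le_top (by
    rw [Subgroup.relIndex_top_right]; exact H.index_ne_zero_of_finite)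

section
variable {n : ℕ} {F : Type*} [Field F]

lemma slext {A B : Matrix.SpecialLinearGroup (Fin n) F}
    (h : (A : Matrix (Fin n) (Fin n) F) = (B : Matrix (Fin n) (Fin n) F)) : A = B :=
  Subtype.ext h

lemma slcoe {A B : Matrix.SpecialLinearGroup (Fin n) F} (h : A = B) :
    (A : Matrix (Fin n) (Fin n) F) = (B : Matrix (Fin n) (Fin n) F) := by rw [h]

/-- torus element -/
def hmat (i j : Fin n) (hij : i ≠ j) (t : Fˣ) : Matrix.SpecialLinearGroup (Fin n) F :=
  ⟨Matrix.diagonal (fun k => if k = i then (t : F) else if k = j then ((t⁻¹ : Fˣ) : F) else 1), by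
    rw [Matrix.det_diagonal]
    rw [← Finset.mul_prod_erase Finset.univ _ (Finset.mem_univ i)]
    rw [← Finset.mul_prod_erase (Finset.univ.erase i) _ (a := j) (by simp [hij.symm])]
    rw [Finset.prod_eq_one]
    · simp [hij.symm]
    · intro k hk
      simp at hk
      simp [hk.1, hk.2]⟩

def hhom (i j : Fin n) (hij : i ≠ j) : Fˣ →* Matrix.SpecialLinearGroup (Fin n) F where
  toFun := hmat i j hij
  map_one' := by
    ext a b
    simp [hmat, Matrix.diagonal, Matrix.one_apply]
  map_mul' s t := by
    apply slext
    rw [Matrix.SpecialLinearGroup.coe_mul]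
    simp only [hmat]
    rw [Matrix.diagonal_mul_diagonal]
    congr 1
    ext k
    split_ifs <;> simp [mul_comm]

def xhom (i j : Fin n) (hij : i ≠ j) : Multiplicative F →* Matrix.SpecialLinearGroup (Fin n) F where
  toFun a := Matrix.SpecialLinearGroup.transvection hij a.toAdd
  map_one' := by simp
  map_mul' a b := by simp [Matrix.SpecialLinearGroup.transvection_add]

lemma hmat_conj (i j : Fin n) (hij : i ≠ j) (t : Fˣ) (a : F) :
    hmat i j hij t * Matrix.SpecialLinearGroup.transvection hij a * hmat i j hij t⁻¹ =
      Matrix.SpecialLinearGroup.transvection hij (t ^ 2 * a) := by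
  have h1 : hmat i j hij t * hmat i j hij t⁻¹ = 1 := by
    have := (hhom (F := F) i j hij).map_mul t t⁻¹
    rw [mul_inv_cancel, map_one] at this
    exact this.symm
  apply slext
  have h2 := slcoe h1
  simp only [Matrix.SpecialLinearGroup.coe_mul, Matrix.SpecialLinearGroup.transvection_coe, mul_add, add_mul,
    mul_one, Matrix.SpecialLinearGroup.coe_one] at h2 ⊢
  rw [h2]
  congr 1
  ext x y
  simp only [hmat, Matrix.mul_diagonal, Matrix.diagonal_mul, Matrix.single_apply]
  by_cases hx : i = x <;> by_cases hy : j = y <;> simp [hx, hy]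
  subst hx hy
  simp [hij.symm]
  ring

lemma hmat_mem (H : Subgroup (Matrix.SpecialLinearGroup (Fin n) F))
    (hH : ∀ (i j : Fin n) (hij : i ≠ j) (a : F), Matrix.SpecialLinearGroup.transvection hij a ∈ H)
    (i j : Fin n) (hij : i ≠ j) (t : Fˣ) : hmat i j hij t ∈ H := by
  have hw : ∀ s : F, s ≠ 0 → ((Matrix.SpecialLinearGroup.transvection hij s *
      Matrix.SpecialLinearGroup.transvection hij.symm (-s⁻¹) *
      Matrix.SpecialLinearGroup.transvection hij s : Matrix.SpecialLinearGroup (Fin n) F) :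
      Matrix (Fin n) (Fin n) F) =
      1 - single i i (1:F) - single j j (1:F) + single i j s - single j i s⁻¹ := by
    intro s hs
    simp only [Matrix.SpecialLinearGroup.coe_mul, Matrix.SpecialLinearGroup.transvection_coe, mul_add, add_mul,
      mul_one, one_mul, single_mul_single_same, single_mul_single_of_ne _ _ _ _ hij,
      single_mul_single_of_ne _ _ _ _ hij.symm, zero_mul, zero_add, add_zero]
    have e1 : s * -s⁻¹ = -1 := by field_simp
    have e2 : -s⁻¹ * s = -1 := by field_simp
    rw [e1, e2]
    have e3 : (-1 : F) * s = -s := by ring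
    rw [e3]
    ext x y
    simp only [Matrix.add_apply, Matrix.sub_apply, Matrix.single_apply]
    split_ifs <;> ring
  have key : hmat i j hij t = (Matrix.SpecialLinearGroup.transvection hij (t : F) *
      Matrix.SpecialLinearGroup.transvection hij.symm (-(t : F)⁻¹) *
      Matrix.SpecialLinearGroup.transvection hij (t : F)) * (Matrix.SpecialLinearGroup.transvection hij (-1 : F) *
      Matrix.SpecialLinearGroup.transvection hij.symm (-(-1 : F)⁻¹) *
      Matrix.SpecialLinearGroup.transvection hij (-1 : F)) := by
    apply slext
    rw [Matrix.SpecialLinearGroup.coe_mul, hw _ t.ne_zero, hw _ (by simp)]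
    simp only [mul_add, add_mul, mul_sub, sub_mul,
      mul_one, one_mul, single_mul_single_same, single_mul_single_of_ne _ _ _ _ hij,
      single_mul_single_of_ne _ _ _ _ hij.symm, zero_mul, zero_add, add_zero]
    ext x y
    simp only [hmat, Matrix.add_apply, Matrix.sub_apply, Matrix.single_apply, Matrix.diagonal_apply, Matrix.one_apply, Matrix.zero_apply]
    have := hij.symm
    by_cases hxy : x = y
    · subst hxy
      by_cases h1 : x = i
      · subst h1
        simp [this]
      · by_cases h2 : x = j
        · subst h2
          simp [hij, Ne.symm h1, h1]
        · simp [h1, h2, Ne.symm h1, Ne.symm h2]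
    · have n1 : ¬ (i = x ∧ i = y) := fun h => hxy (h.1.symm.trans h.2)
      have n2 : ¬ (j = x ∧ j = y) := fun h => hxy (h.1.symm.trans h.2)
      simp only [hxy, n1, n2, if_false]
      split_ifs <;> simp_all
  rw [key]
  exact H.mul_mem (H.mul_mem (H.mul_mem (hH _ _ _ _) (hH _ _ _ _)) (hH _ _ _ _))
    (H.mul_mem (H.mul_mem (hH _ _ _ _) (hH _ _ _ _)) (hH _ _ _ _))

lemma eq_top_of_transvections (hn : 0 < n) (H : Subgroup (Matrix.SpecialLinearGroup (Fin n) F))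
    (hH : ∀ (i j : Fin n) (hij : i ≠ j) (a : F), Matrix.SpecialLinearGroup.transvection hij a ∈ H) :
    H = ⊤ := by
  rw [eq_top_iff]
  rintro ⟨M, hM⟩ -
  have : ∃ h : M.det = 1, (⟨M, h⟩ : Matrix.SpecialLinearGroup (Fin n) F) ∈ H := by
    apply Matrix.diagonal_transvection_induction
      (fun M => ∃ h : M.det = 1, (⟨M, h⟩ : Matrix.SpecialLinearGroup (Fin n) F) ∈ H)
    · intro D hD
      rw [hM] at hD
      refine ⟨hD, ?_⟩
      rw [det_diagonal] at hD
      have hD0 : ∀ i, D i ≠ 0 := by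
        intro i hi
        rw [Finset.prod_eq_zero (Finset.mem_univ i) hi] at hD
        exact zero_ne_one hD
      let z : Fin n := ⟨0, hn⟩
      let s : Finset (Fin n) := Finset.univ.erase z
      have hprod : (⟨diagonal D, by rw [det_diagonal, hD]⟩ : Matrix.SpecialLinearGroup (Fin n) F) =
          (s.attach.toList.map (fun i => hmat i.1 z (Finset.ne_of_mem_erase i.2)
            (Units.mk0 (D i.1) (hD0 i.1)))).prod := by
        have hp : ∀ l : List s, (((l.map (fun i => hmat i.1 z (Finset.ne_of_mem_erase i.2)
            (Units.mk0 (D i.1) (hD0 i.1)))).prod : Matrix.SpecialLinearGroup (Fin n) F) :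
            Matrix (Fin n) (Fin n) F) = diagonal (fun k => (l.map (fun i : s =>
              if k = i.1 then D i.1 else if k = z then (D i.1)⁻¹ else 1)).prod) := by
          intro l
          induction l with
          | nil => simp
          | cons a l ih =>
            rw [List.map_cons, List.prod_cons, Matrix.SpecialLinearGroup.coe_mul, ih]
            simp only [hmat, diagonal_mul_diagonal]
            congr 1
        apply slext
        rw [hp]
        rw [Matrix.SpecialLinearGroup.coe_mk]
        congr 1
        ext k
        rw [Finset.prod_map_toList]
        by_cases hk : k = z
        · rw [Finset.prod_congr rfl (g := fun i : s => (D i.1)⁻¹)]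
          · rw [Finset.prod_attach s (fun i => (D i)⁻¹), Finset.prod_inv_distrib]
            rw [← Finset.mul_prod_erase Finset.univ _ (Finset.mem_univ z)] at hD
            rw [hk]
            exact eq_inv_of_mul_eq_one_left hD
          · intro i _
            have : k ≠ i.1 := by rw [hk]; exact (Finset.ne_of_mem_erase i.2).symm
            rw [if_neg this, if_pos hk]
        · have hks : k ∈ s := Finset.mem_erase.2 ⟨hk, Finset.mem_univ _⟩
          rw [Finset.prod_eq_single ⟨k, hks⟩]
          · simp
          · intro b _ hb
            have : k ≠ b.1 := fun h => hb (Subtype.ext h.symm)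
            simp [this, hk]
          · simp
      rw [hprod]
      apply H.list_prod_mem
      intro x hx
      rw [List.mem_map] at hx
      obtain ⟨i, _, rfl⟩ := hx
      exact hmat_mem H hH _ _ _ _
    · intro t
      exact ⟨t.det, hH t.i t.j t.hij t.c⟩
    · rintro A B ⟨hA, hA'⟩ ⟨hB, hB'⟩
      exact ⟨by rw [det_mul, hA, hB, one_mul], H.mul_mem hA' hB'⟩
  exact this.2

lemma eq_top_of_small_index [Fintype F] (hn : 0 < n)
    (H : Subgroup (Matrix.SpecialLinearGroup (Fin n) F))
    (hq : 100 ≤ Fintype.card F) (hI : H.index ^ 4 ≤ Fintype.card F) : H = ⊤ := by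
  apply eq_top_of_transvections hn
  intro i j hij
  classical
  let A := H.comap (xhom (F := F) i j hij)
  let D := H.comap (hhom (F := F) i j hij)
  have hmemA : ∀ a : F, Multiplicative.ofAdd a ∈ A ↔ Matrix.SpecialLinearGroup.transvection hij a ∈ H :=
    fun a => Iff.rfl
  have hA : Fintype.card F ≤ Nat.card A * H.index := by
    have := card_comap_mul_index (xhom (F := F) i j hij) H
    rwa [Nat.card_eq_fintype_card (α := Multiplicative F), Fintype.card_multiplicative] at this
  have hD : Fintype.card F - 1 ≤ Nat.card D * H.index := by
    have := card_comap_mul_index (hhom (F := F) i j hij) H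
    rwa [Nat.card_eq_fintype_card (α := Fˣ), Fintype.card_units] at this
  let B : Subring F :=
    { carrier := {b | ∀ a : F, Multiplicative.ofAdd a ∈ A → Multiplicative.ofAdd (b * a) ∈ A}
      mul_mem' := by
        intro x y hx hy a ha
        rw [mul_assoc]
        exact hx _ (hy _ ha)
      one_mem' := by intro a ha; rwa [one_mul]
      add_mem' := by
        intro x y hx hy a ha
        rw [add_mul]
        exact A.mul_mem (hx a ha) (hy a ha)
      zero_mem' := by
        intro a ha
        rw [zero_mul]
        exact A.one_mem
      neg_mem' := by
        intro x hx a ha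
        rw [neg_mul]
        exact A.inv_mem (hx a ha) }
  have hDB : ∀ t : Fˣ, t ∈ D → (t : F) ^ 2 ∈ B := by
    intro t ht a ha
    rw [hmemA] at ha ⊢
    rw [← hmat_conj i j hij t a]
    exact H.mul_mem (H.mul_mem ht ha) (D.inv_mem ht)
  have hcard : Nat.card D ≤ 2 * Nat.card B := by
    let f : D → B := fun t => ⟨(t.1 : F) ^ 2, hDB t.1 t.2⟩
    have : Fintype.card D ≤ 2 * Fintype.card B := by
      rw [← Finset.card_univ, ← Finset.card_univ (α := B)]
      apply Finset.card_le_mul_card_image_of_maps_to (f := f) (by simp)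
      intro b _
      by_contra hlt
      push Not at hlt
      rw [Finset.two_lt_card] at hlt
      obtain ⟨x, hx, y, hy, z, hz, h1, h2, h3⟩ := hlt
      simp only [Finset.mem_filter, Finset.mem_univ, true_and] at hx hy hz
      have e1 : (x.1 : F) ^ 2 = (y.1 : F) ^ 2 := congrArg Subtype.val (hx.trans hy.symm)
      have e2 : (x.1 : F) ^ 2 = (z.1 : F) ^ 2 := congrArg Subtype.val (hx.trans hz.symm)
      have c1 : (x.1 : F) = -(y.1 : F) := (sq_eq_sq_iff_eq_or_eq_neg.1 e1).resolve_left
        (fun h => h1 (Subtype.ext (Units.ext h)))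
      have c2 : (x.1 : F) = -(z.1 : F) := (sq_eq_sq_iff_eq_or_eq_neg.1 e2).resolve_left
        (fun h => h2 (Subtype.ext (Units.ext h)))
      apply h3
      apply Subtype.ext
      apply Units.ext
      exact neg_injective (c1.symm.trans c2)
    rwa [← Nat.card_eq_fintype_card, ← Nat.card_eq_fintype_card] at this
  set I := H.index with hIdef
  set q := Fintype.card F with hqdef
  have hI1 : 1 ≤ I := Nat.one_le_iff_ne_zero.2 H.index_ne_zero_of_finite
  have hB : q < (Nat.card B) ^ 2 := by
    have h1 : q - 1 ≤ 2 * Nat.card B * I := hD.trans (Nat.mul_le_mul_right _ hcard)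
    set b := Nat.card B
    by_contra hlt
    push Not at hlt
    have h2 : (q - 1) ^ 4 ≤ 16 * (b ^ 2) ^ 2 * I ^ 4 := by
      calc (q - 1) ^ 4 ≤ (2 * b * I) ^ 4 := Nat.pow_le_pow_left h1 4
        _ = _ := by ring
    have h3 : 16 * (b ^ 2) ^ 2 * I ^ 4 ≤ 16 * q ^ 2 * q := by gcongr
    obtain ⟨r, hr⟩ : ∃ r, q = r + 1 := ⟨q - 1, by omega⟩
    rw [hr, Nat.add_sub_cancel] at h2
    rw [hr] at h3
    have h4 : r ^ 4 ≤ 16 * (r + 1) ^ 3 := by nlinarith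
    have hr99 : 99 ≤ r := by omega
    have h5 : (r + 1) ^ 3 ≤ 2 * r ^ 3 := by nlinarith [Nat.pow_le_pow_left hr99 2, Nat.pow_le_pow_left hr99 3]
    have h6 : 99 * r ^ 3 ≤ r ^ 4 := by
      rw [pow_succ r 3, mul_comm]; gcongr
    have h7 : 0 < r ^ 3 := by positivity
    omega
  have hBtop := subring_eq_top_of_card B hB
  have hA1 : 1 < Nat.card A := by
    by_contra hle
    have h1 : q ≤ 1 * I := hA.trans (Nat.mul_le_mul_right _ (by omega))
    have h2 : q ^ 4 ≤ q := (Nat.pow_le_pow_left (by omega) 4).trans hI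
    nlinarith [Nat.pow_le_pow_left hq 3]
  obtain ⟨a, ha, ha1⟩ := A.one_lt_card_iff_ne_bot.1 hA1 |> Subgroup.ne_bot_iff_exists_ne_one.1
    |> fun ⟨a, h⟩ => (⟨a.1, a.2, fun h' => h (Subtype.ext h')⟩ : ∃ a, a ∈ A ∧ a ≠ 1)
  intro c
  have := hBtop (c / a.toAdd) a.toAdd ha
  have hne : a.toAdd ≠ 0 := fun h => ha1 (by rw [← ofAdd_toAdd a, h]; rfl)
  rw [div_mul_cancel₀ _ hne] at this
  exact (hmemA c).1 this
end

section absS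
variable {ι K : Type*} [Fintype ι] [DecidableEq ι] [Field K]

/-- Root relation attached to a set of matrices. -/
def RootRel (S : Submonoid (Matrix ι ι K)) (a b : ι) : Prop :=
  a = b ∨ ∀ r : K, (1 + Matrix.single a b r) ∈ S

lemma absS_A (S : Submonoid (Matrix ι ι K)) (hdiag : ∀ d : ι → K, Matrix.diagonal d ∈ S)
    (hlim : ∀ γ : Matrix ι ι (Polynomial K), (∀ t : K, t ≠ 0 → γ.map (Polynomial.eval t) ∈ S) →
      γ.map (Polynomial.eval 0) ∈ S)
    (g g' : Matrix ι ι K) (hg : g ∈ S) (hg' : g' ∈ S) (hgg : g * g' = 1)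
    (i j k : ι) (hij : i ≠ j) (h : g i k * g' k j ≠ 0) : RootRel S i j := by
  right
  intro r0
  obtain ⟨r, hr⟩ : ∃ r, r * (g i k * g' k j) = r0 := ⟨r0 / (g i k * g' k j), div_mul_cancel₀ _ h⟩
  let u : ι → Polynomial K := fun a => if a = i then 1 else if a = j then Polynomial.X ^ 2 else Polynomial.X
  let f : ι → Polynomial K := fun a => if a = j then 1 else if a = i then Polynomial.X ^ 2 else Polynomial.X
  let γ : Matrix ι ι (Polynomial K) := Matrix.of (fun a b =>
    (if a = b then 1 else 0) + Polynomial.C r * (u a * Polynomial.C (g a k)) * (f b * Polynomial.C (g' k b)))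
  have hγ : ∀ t a b, γ.map (Polynomial.eval t) a b = (if a = b then 1 else 0) +
      r * ((if a = i then 1 else if a = j then t ^ 2 else t) * g a k) *
        ((if b = j then 1 else if b = i then t ^ 2 else t) * g' k b) := by
    intro t a b
    simp only [γ, u, f, Matrix.map_apply, Matrix.of_apply]
    simp only [Polynomial.eval_add, Polynomial.eval_mul, Polynomial.eval_C,
      apply_ite (Polynomial.eval t), Polynomial.eval_one, Polynomial.eval_zero, Polynomial.eval_pow,
      Polynomial.eval_X]
  have h0 : γ.map (Polynomial.eval 0) = 1 + Matrix.single i j r0 := by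
    ext a b
    rw [hγ]
    simp only [Matrix.add_apply, Matrix.single_apply, Matrix.one_apply]
    by_cases ha : a = i <;> by_cases hb : b = j
    · subst ha hb
      simp [hij, ← hr]
      ring
    · subst ha
      have hb' : ¬ j = b := fun h => hb h.symm
      by_cases hb2 : b = a
      · subst hb2; simp [hb, hb']
      · simp [hb, hb', hb2, Ne.symm hb2]
    · subst hb
      have ha' : ¬ i = a := fun h => ha h.symm
      by_cases hb2 : a = b
      · subst hb2; simp [ha, ha']
      · simp [ha, ha', hb2]
    · have hb' : ¬ j = b := fun h => hb h.symm
      have ha' : ¬ i = a := fun h => ha h.symm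
      by_cases hb2 : a = b
      · subst hb2
        simp [ha, ha', hb]
      · by_cases hb3 : a = j <;> by_cases hb4 : b = i <;> simp [ha, ha', hb, hb', hb2, hb3, hb4, hij, Ne.symm hij]
  rw [← h0]
  apply hlim
  intro t ht
  let d : ι → K := fun a => if a = i then t⁻¹ else if a = j then t else 1
  let d' : ι → K := fun a => if a = i then t else if a = j then t⁻¹ else 1
  have : γ.map (Polynomial.eval t) = Matrix.diagonal d * g *
      Matrix.diagonal (fun c => 1 + if c = k then r * t ^ 2 else 0) * g' * Matrix.diagonal d' := by
    have e1 : g * Matrix.diagonal (fun c => 1 + if c = k then r * t ^ 2 else 0) * g' =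
        1 + Matrix.of (fun a b => g a k * (r * t ^ 2) * g' k b) := by
      have e2 : (Matrix.diagonal (fun c => 1 + if c = k then r * t ^ 2 else 0) : Matrix ι ι K) =
        1 + Matrix.diagonal (fun c => if c = k then r * t ^ 2 else 0) := by
        rw [← Matrix.diagonal_one, Matrix.diagonal_add]
      rw [e2, mul_add, add_mul, mul_one, hgg]
      congr 1
      ext a b
      rw [Matrix.mul_apply]
      simp [Matrix.mul_diagonal]
    rw [Matrix.mul_assoc (Matrix.diagonal d) g, Matrix.mul_assoc (Matrix.diagonal d), e1]
    ext a b
    rw [Matrix.mul_diagonal, Matrix.diagonal_mul]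
    rw [hγ]
    simp only [d, d', Matrix.add_apply, Matrix.one_apply, Matrix.of_apply]
    have hji := hij.symm
    by_cases hab : a = b
    · subst hab
      by_cases h1 : a = i
      · subst h1
        simp [hij]
        field_simp
      · by_cases h2 : a = j
        · subst h2
          simp [h1]
          field_simp
        · simp [h1, h2]
          ring
    · simp only [hab, if_false]
      by_cases h1 : a = i
      · subst h1
        by_cases h3 : b = j
        · subst h3
          simp [hji]
          field_simp
        · simp [Ne.symm hab, h3]
          field_simp
      · by_cases h2 : a = j
        · subst h2
          by_cases h3 : b = i
          · subst h3; simp [h1, hij]; field_simp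
          · simp [h1, h3, Ne.symm hab]; field_simp
        · by_cases h3 : b = i
          · subst h3; simp [h1, h2, hij]; field_simp
          · by_cases h4 : b = j
            · subst h4; simp [h1, h2, h3]; field_simp
            · simp [h1, h2, h3, h4]; ring
  rw [this]
  exact S.mul_mem (S.mul_mem (S.mul_mem (S.mul_mem (hdiag _) hg) (hdiag _)) hg') (hdiag _)

lemma rootRel_trans (S : Submonoid (Matrix ι ι K)) {a b c : ι} (h1 : RootRel S a b)
    (h2 : RootRel S b c) : RootRel S a c := by
  by_cases hac : a = c
  · exact Or.inl hac
  rcases h1 with rfl | h1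
  · exact h2
  by_cases hab : a = b
  · rw [hab]; exact h2
  rcases h2 with rfl | h2
  · exact Or.inr h1
  by_cases hbc : b = c
  · rw [← hbc]; exact Or.inr h1
  right
  intro r
  have : (1 + Matrix.single a c r : Matrix ι ι K) = (1 + Matrix.single a b r) *
      (1 + Matrix.single b c 1) * (1 + Matrix.single a b (-r)) * (1 + Matrix.single b c (-1)) := by
    have hca : c ≠ a := Ne.symm hac
    have hba : b ≠ a := Ne.symm hab
    have hcb : c ≠ b := Ne.symm hbc
    simp only [mul_add, add_mul, mul_one, one_mul, Matrix.single_mul_single_same,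
      Matrix.single_mul_single_of_ne _ _ _ _ hba, Matrix.single_mul_single_of_ne _ _ _ _ hca,
      Matrix.single_mul_single_of_ne _ _ _ _ hcb]
    ext x y
    simp only [Matrix.add_apply, Matrix.single_apply, Matrix.zero_apply, Matrix.zero_mul, Matrix.one_apply]
    split_ifs <;> ring
  rw [this]
  exact S.mul_mem (S.mul_mem (S.mul_mem (h1 _) (h2 _)) (h1 _)) (h2 _)

lemma rootRel_symm (S : Submonoid (Matrix ι ι K))
    (hsym : ∀ i j : ι, ∃ π : Equiv.Perm ι, π i = j ∧ ∀ a b, RootRel S a b → RootRel S (π a) (π b))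
    {i j : ι} (h : RootRel S i j) : RootRel S j i := by
  classical
  let U : ι → Finset ι := fun i => Finset.univ.filter (fun j => RootRel S i j)
  have hle : ∀ i j, (U i).card ≤ (U j).card := by
    intro i j
    obtain ⟨π, hπ, hR⟩ := hsym i j
    apply Finset.card_le_card_of_injOn π
    · intro x hx
      simp only [U, Finset.coe_filter, Finset.mem_univ, true_and, Set.mem_setOf_eq] at hx ⊢
      rw [← hπ]
      exact hR _ _ hx
    · exact π.injective.injOn
  have hsub : U j ⊆ U i := by
    intro x hx
    simp only [U, Finset.mem_filter, Finset.mem_univ, true_and] at hx ⊢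
    exact rootRel_trans S h hx
  have heq := Finset.eq_of_subset_of_card_le hsub (hle _ _)
  have : i ∈ U j := by
    rw [heq]
    simp only [U, Finset.mem_filter, Finset.mem_univ, true_and]
    exact Or.inl rfl
  simpa only [U, Finset.mem_filter, Finset.mem_univ, true_and] using this


theorem absS_top (S : Submonoid (Matrix ι ι K)) (hdiag : ∀ d : ι → K, Matrix.diagonal d ∈ S)
    (hlim : ∀ γ : Matrix ι ι (Polynomial K), (∀ t : K, t ≠ 0 → γ.map (Polynomial.eval t) ∈ S) →
      γ.map (Polynomial.eval 0) ∈ S)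
    (hsym : ∀ i j : ι, ∃ π : Equiv.Perm ι, π i = j ∧ ∀ a b, RootRel S a b → RootRel S (π a) (π b))
    (g g' : Matrix ι ι K) (hg : g ∈ S) (hg' : g' ∈ S) (hgg : g * g' = 1)
    (w : ι → K) (hw : ∀ i, w i ≠ 0) (μ : K) (hgw : g.mulVec w = μ • w)
    (e : ι → K) (N : ℕ) (hN : N = (Fintype.card ι).factorial)
    (he : ∀ w' : ι → K, (∀ j : ℕ, dotProduct e (((g ^ N) ^ j).mulVec w') = 0) → w' = 0) :
    ∀ s, s ∈ S := by
  classical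
  have hA := absS_A S hdiag hlim
  have hsymm : ∀ {i j}, RootRel S i j → RootRel S j i := fun h => rootRel_symm S hsym h
  have htrans : ∀ {i j k}, RootRel S i j → RootRel S j k → RootRel S i k :=
    fun h1 h2 => rootRel_trans S h1 h2
  have hrefl : ∀ i, RootRel S i i := fun i => Or.inl rfl
  -- step 1
  have step1 : ∀ g g' : Matrix ι ι K, g ∈ S → g' ∈ S → g * g' = 1 → ∀ k l l', g l k ≠ 0 →
      g l' k ≠ 0 → RootRel S l l' := by
    intro g g' hg hg' hgg k l l' hl hl'
    have hgg2 : g' * g = 1 := mul_eq_one_comm.1 hgg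
    have : ∃ l0, g' k l0 * g l0 k ≠ 0 := by
      by_contra hcon
      push Not at hcon
      have h1 : (g' * g) k k = 1 := by rw [hgg2]; simp
      rw [Matrix.mul_apply, Finset.sum_eq_zero (fun l _ => hcon l)] at h1
      exact zero_ne_one h1
    obtain ⟨l0, hl0⟩ := this
    have hall : ∀ l, g l k ≠ 0 → RootRel S l l0 := by
      intro l hl
      by_cases h : l = l0
      · exact Or.inl h
      · exact hA g g' hg hg' hgg l l0 k h (mul_ne_zero hl (left_ne_zero_of_mul hl0))
    exact htrans (hall l hl) (hsymm (hall l' hl'))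
  have step2 : ∀ g g' : Matrix ι ι K, g ∈ S → g' ∈ S → g * g' = 1 → ∀ k k' l l', RootRel S k k' →
      g l k ≠ 0 → g l' k' ≠ 0 → RootRel S l l' := by
    intro g g' hg hg' hgg k k' l l' hk hl hl'
    by_cases hkk : k = k'
    · subst hkk
      exact step1 g g' hg hg' hgg k l l' hl hl'
    have hk := hk.resolve_left hkk
    by_cases h1 : g l k' = 0
    swap
    · exact step1 g g' hg hg' hgg k' l l' h1 hl'
    by_cases h2 : g l' k = 0
    swap
    · exact step1 g g' hg hg' hgg k l l' hl h2
    have hinv : (g * (1 + Matrix.single k k' 1)) * ((1 + Matrix.single k k' (-1)) * g') = 1 := by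
      have h3 : (1 + Matrix.single k k' (1:K)) * (1 + Matrix.single k k' (-1)) = 1 := by
        rw [mul_add, add_mul, add_mul, Matrix.single_mul_single_of_ne _ _ _ _ (Ne.symm hkk)]
        rw [← Matrix.single_neg]
        simp
      rw [Matrix.mul_assoc, ← Matrix.mul_assoc (1 + Matrix.single k k' (1:K)), h3, one_mul, hgg]
    have hent : ∀ x, (g * (1 + Matrix.single k k' (1:K)) : Matrix ι ι K) x k' = g x k' + g x k := by
      intro x
      rw [mul_add, Matrix.add_apply, mul_one, Matrix.mul_single_apply_same, mul_one]
    apply step1 _ _ (S.mul_mem hg (hk 1)) (S.mul_mem (hk (-1)) hg') hinv k'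
    · rw [hent, h1, zero_add]; exact hl
    · rw [hent, h2, add_zero]; exact hl'
  let st : Setoid ι := ⟨RootRel S, hrefl, hsymm, htrans⟩
  have hcol : ∀ g g' : Matrix ι ι K, g * g' = 1 → ∀ k, ∃ l, g l k ≠ 0 := by
    intro g g' hgg k
    have hgg2 : g' * g = 1 := mul_eq_one_comm.1 hgg
    by_contra hcon
    push Not at hcon
    have h1 : (g' * g) k k = 1 := by rw [hgg2]; simp
    rw [Matrix.mul_apply, Finset.sum_eq_zero (fun l _ => by rw [hcon l, mul_zero])] at h1
    exact zero_ne_one h1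
  have hp : ∀ g g' : Matrix ι ι K, g ∈ S → g' ∈ S → g * g' = 1 → ∃ p : Quotient st → Quotient st,
      ∀ k l, g l k ≠ 0 → (⟦l⟧ : Quotient st) = p ⟦k⟧ := by
    intro g g' hg hg' hgg
    choose c hc using hcol g g' hgg
    refine ⟨Quotient.lift (fun k => ⟦c k⟧) ?_, ?_⟩
    · intro a b hab
      exact Quotient.sound (step2 g g' hg hg' hgg a b _ _ hab (hc a) (hc b))
    · intro k l hl
      exact Quotient.sound (step2 g g' hg hg' hgg k k _ _ (hrefl k) hl (hc k))
  have hgg2 : g' * g = 1 := mul_eq_one_comm.1 hgg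
  obtain ⟨p, hp1⟩ := hp g g' hg hg' hgg
  obtain ⟨p', hp2⟩ := hp g' g hg' hg hgg2
  have hpp : ∀ (g g' : Matrix ι ι K) (p p' : Quotient st → Quotient st), g * g' = 1 →
      (∀ k l, g l k ≠ 0 → (⟦l⟧ : Quotient st) = p ⟦k⟧) →
      (∀ k l, g' l k ≠ 0 → (⟦l⟧ : Quotient st) = p' ⟦k⟧) → ∀ x, p (p' x) = x := by
    intro g g' p p' hgg h1 h2 x
    induction x using Quotient.inductionOn with
    | h k =>
      have : ∃ l, g k l * g' l k ≠ 0 := by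
        by_contra hcon
        push Not at hcon
        have h1 : (g * g') k k = 1 := by rw [hgg]; simp
        rw [Matrix.mul_apply, Finset.sum_eq_zero (fun l _ => hcon l)] at h1
        exact zero_ne_one h1
      obtain ⟨l, hl⟩ := this
      rw [← h2 k l (right_ne_zero_of_mul hl), ← h1 l k (left_ne_zero_of_mul hl)]
  let pe : Equiv.Perm (Quotient st) := ⟨p, p', hpp g' g p' p hgg2 hp2 hp1, hpp g g' p p' hgg hp1 hp2⟩
  have hpow : ∀ m : ℕ, ∀ k l, (g ^ m) l k ≠ 0 → (⟦l⟧ : Quotient st) = (pe ^ m) ⟦k⟧ := by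
    intro m
    induction m with
    | zero =>
      intro k l h
      rw [pow_zero, Matrix.one_apply] at h
      have : l = k := by
        by_contra hne
        exact h (if_neg hne)
      rw [this]; rfl
    | succ m ih =>
      intro k l h
      rw [pow_succ, Matrix.mul_apply] at h
      obtain ⟨x, _, hx⟩ := Finset.exists_ne_zero_of_sum_ne_zero h
      rw [ih x l (left_ne_zero_of_mul hx), hp1 k x (right_ne_zero_of_mul hx), pow_succ]
      rfl
  have hpeN : pe ^ N = 1 := by
    have h1 : pe ^ (Fintype.card (Quotient st)).factorial = 1 := by
      rw [← Fintype.card_perm]; exact pow_card_eq_one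
    have h2 : (Fintype.card (Quotient st)).factorial ∣ N := by
      rw [hN]
      exact Nat.factorial_dvd_factorial (Fintype.card_quotient_le st)
    exact orderOf_dvd_iff_pow_eq_one.1 ((orderOf_dvd_of_pow_eq_one h1).trans h2)
  have hblock : ∀ k l, (g ^ N) l k ≠ 0 → RootRel S l k := by
    intro k l h
    have := hpow N k l h
    rw [hpeN] at this
    exact Quotient.exact this
  -- all related
  have hall : ∀ i j, RootRel S i j := by
    by_contra hcon
    push Not at hcon
    obtain ⟨i, j, hij⟩ := hcon
    let wB : ι → K := fun k => if RootRel S i k then w k else 0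
    have hyw : ∀ m : ℕ, ∀ m', m' = g ^ m → m'.mulVec w = (μ ^ m) • w := by
      intro m
      induction m with
      | zero => intro m' h; simp [h]
      | succ m ih =>
        intro m' h
        rw [h, pow_succ, ← Matrix.mulVec_mulVec, hgw, Matrix.mulVec_smul, ih _ rfl, smul_smul,
          pow_succ, mul_comm]
    have hy1 := hyw N _ rfl
    have hy2 : (g ^ N).mulVec wB = (μ ^ N) • wB := by
      ext l
      have hl := congrFun hy1 l
      rw [Pi.smul_apply] at hl ⊢
      simp only [Matrix.mulVec, dotProduct] at hl ⊢
      by_cases hil : RootRel S i l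
      · have : wB l = w l := if_pos hil
        rw [this, ← hl]
        apply Finset.sum_congr rfl
        intro k _
        by_cases hk : (g ^ N) l k = 0
        · rw [hk, zero_mul, zero_mul]
        · have : wB k = w k := if_pos (htrans hil (hblock k l hk))
          rw [this]
      · have : wB l = 0 := if_neg hil
        rw [this, smul_zero]
        apply Finset.sum_eq_zero
        intro k _
        by_cases hk : (g ^ N) l k = 0
        · rw [hk, zero_mul]
        · have : wB k = 0 := if_neg (fun h => hil (htrans h (hsymm (hblock k l hk))))
          rw [this, mul_zero]
    have hypow : ∀ w' : ι → K, (g ^ N).mulVec w' = (μ ^ N) • w' → ∀ j : ℕ,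
        ((g ^ N) ^ j).mulVec w' = ((μ ^ N) ^ j) • w' := by
      intro w' h j
      induction j with
      | zero => simp
      | succ j ih =>
        rw [pow_succ, ← Matrix.mulVec_mulVec, h, Matrix.mulVec_smul, ih, smul_smul,
          pow_succ, mul_comm]
    let w' : ι → K := dotProduct e wB • w - dotProduct e w • wB
    have hw' : w' = 0 := by
      apply he
      intro j
      have : (g ^ N).mulVec w' = (μ ^ N) • w' := by
        simp only [w']
        rw [Matrix.mulVec_sub, Matrix.mulVec_smul, Matrix.mulVec_smul, hy1, hy2, smul_sub,
          smul_comm (μ ^ N), smul_comm (μ ^ N)]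
      rw [hypow w' this, dotProduct_smul]
      have : dotProduct e w' = 0 := by
        simp only [w']
        rw [dotProduct_sub, dotProduct_smul, dotProduct_smul]
        simp [mul_comm]
      rw [this, smul_zero]
    have hwB0 : dotProduct e wB = 0 := by
      have := congrFun hw' j
      have hj : wB j = 0 := if_neg hij
      simp only [w', Pi.sub_apply, Pi.smul_apply, hj, mul_zero, sub_zero, Pi.zero_apply, smul_eq_mul] at this
      exact (mul_eq_zero.1 this).resolve_right (hw j)
    have : wB = 0 := by
      apply he
      intro j
      rw [hypow wB hy2, dotProduct_smul, hwB0, smul_zero]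
    have h1 := congrFun this i
    have hi : wB i = w i := if_pos (hrefl i)
    rw [hi] at h1
    exact hw i h1
  intro s
  apply Matrix.diagonal_transvection_induction (fun s => s ∈ S)
  · intro d _
    exact hdiag d
  · intro t
    exact (hall t.i t.j).resolve_left t.hij t.c
  · intro A B
    exact S.mul_mem

end absS

lemma totalDegree_bind_le {σ τ R : Type*} [CommSemiring R] [Nontrivial R] (g : σ → MvPolynomial τ R)
    (hg : ∀ i, (g i).totalDegree ≤ 1) (f : MvPolynomial σ R) :
    (MvPolynomial.bind₁ g f).totalDegree ≤ f.totalDegree := by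
  conv_lhs => rw [f.as_sum, map_sum]
  apply MvPolynomial.totalDegree_finsetSum_le
  intro d hd
  rw [MvPolynomial.bind₁_monomial]
  refine (MvPolynomial.totalDegree_mul _ _).trans ?_
  rw [MvPolynomial.totalDegree_C, zero_add]
  refine (MvPolynomial.totalDegree_finset_prod _ _).trans ?_
  refine le_trans ?_ (MvPolynomial.le_totalDegree hd)
  rw [Finsupp.sum]
  apply Finset.sum_le_sum
  intro i _
  refine (MvPolynomial.totalDegree_pow _ _).trans ?_
  calc d i * (g i).totalDegree ≤ d i * 1 := Nat.mul_le_mul_left _ (hg i)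
    _ = d i := mul_one _

lemma sz_fin {F K : Type*} [Field F] [Fintype F] [Field K] [Algebra F K] {n : ℕ} (hn : 0 < n)
    (p : MvPolynomial (Fin n) K) (D : ℕ) (hp : p.totalDegree ≤ D) (A : Finset (Fin n → F))
    (hA : D * Fintype.card F ^ (n - 1) < A.card)
    (hz : ∀ c ∈ A, MvPolynomial.eval (fun i => algebraMap F K (c i)) p = 0) : p = 0 := by
  classical
  by_contra hp0
  have hinj : Function.Injective (algebraMap F K) := (algebraMap F K).injective
  let S : Finset K := Finset.univ.image (algebraMap F K)
  have hS : S.card = Fintype.card F := Finset.card_image_of_injective _ hinj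
  have h := MvPolynomial.schwartz_zippel_totalDegree hp0 S
  rw [hS] at h
  set Z := Finset.filter (fun f => MvPolynomial.eval f p = 0) (Fintype.piFinset fun _ : Fin n => S) with hZ
  have hAZ : A.card ≤ Z.card := by
    apply Finset.card_le_card_of_injOn (fun c i => algebraMap F K (c i))
    · intro c hc
      simp only [hZ, Finset.coe_filter, Set.mem_setOf_eq, Fintype.mem_piFinset]
      exact ⟨fun i => Finset.mem_image_of_mem _ (Finset.mem_univ _), hz c hc⟩
    · intro c _ c' _ h
      ext i
      exact hinj (congrFun h i)
  have hq : (0 : ℚ≥0) < Fintype.card F := by exact_mod_cast Fintype.card_pos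
  rw [div_le_div_iff₀ (by positivity) hq] at h
  have h2 : Z.card * Fintype.card F ≤ p.totalDegree * Fintype.card F ^ n := by exact_mod_cast h
  have h3 : p.totalDegree * Fintype.card F ^ n = p.totalDegree * Fintype.card F ^ (n - 1) * Fintype.card F := by
    rw [mul_assoc, ← pow_succ, Nat.sub_add_cancel hn]
  rw [h3] at h2
  have h4 := Nat.le_of_mul_le_mul_right h2 Fintype.card_pos
  have h5 : p.totalDegree * Fintype.card F ^ (n - 1) ≤ D * Fintype.card F ^ (n - 1) :=
    Nat.mul_le_mul_right _ hp
  omega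

lemma sz_gen {F K : Type*} [Field F] [Fintype F] [Field K] [Algebra F K] {σ : Type*} [Fintype σ]
    [Nonempty σ]
    (p : MvPolynomial σ K) (D : ℕ) (hp : p.totalDegree ≤ D) (A : Finset (σ → F))
    (hA : D * Fintype.card F ^ (Fintype.card σ - 1) < A.card)
    (hz : ∀ c ∈ A, MvPolynomial.eval (fun i => algebraMap F K (c i)) p = 0) : p = 0 := by
  classical
  let e := Fintype.equivFin σ
  have h := sz_fin (F := F) (K := K) Fintype.card_pos (MvPolynomial.rename e p) D
    ((MvPolynomial.totalDegree_rename_le _ _).trans hp)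
    (A.map (Equiv.arrowCongr e (Equiv.refl F)).toEmbedding) (by rwa [Finset.card_map]) (by
      intro c hc
      rw [Finset.mem_map] at hc
      obtain ⟨a, ha, rfl⟩ := hc
      rw [MvPolynomial.eval_rename]
      rw [← hz a ha]
      congr 2
      ext i
      simp)
  exact (MvPolynomial.rename_injective e e.injective) (by rw [h, map_zero])

section core
variable {F K : Type*} [Field F] [Field K] [Algebra F K] {n : ℕ}

/-- evaluation of a polynomial in matrix entries -/
noncomputable def evm (m : Matrix (Fin n) (Fin n) K) (f : MvPolynomial (Fin n × Fin n) K) : K :=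
  MvPolynomial.eval (fun ij => m ij.1 ij.2) f

def VanOn (Hs : Submonoid (Matrix (Fin n) (Fin n) F)) (f : MvPolynomial (Fin n × Fin n) K) : Prop :=
  ∀ h ∈ Hs, evm (h.map (algebraMap F K)) f = 0

/-- degree `D` closure -/
def YB (K : Type*) [Field K] [Algebra F K] (Hs : Submonoid (Matrix (Fin n) (Fin n) F)) (D : ℕ) :
    Set (Matrix (Fin n) (Fin n) K) :=
  {m | ∀ f : MvPolynomial (Fin n × Fin n) K, f.totalDegree ≤ D → VanOn Hs f → evm m f = 0}

lemma evm_bind {τ : Type*} (c : τ → K) (g : Fin n × Fin n → MvPolynomial τ K)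
    (f : MvPolynomial (Fin n × Fin n) K) :
    MvPolynomial.eval c (MvPolynomial.bind₁ g f) =
      evm (Matrix.of (fun i j => MvPolynomial.eval c (g (i, j)))) f := by
  have := MvPolynomial.eval₂Hom_bind₁ (RingHom.id K) c g f
  exact this

lemma totalDegree_lin {τ κ : Type*} (s : Finset κ) (x : κ → τ) (a : κ → K) :
    (∑ k ∈ s, MvPolynomial.X (x k) * MvPolynomial.C (a k) : MvPolynomial τ K).totalDegree ≤ 1 := by
  apply MvPolynomial.totalDegree_finsetSum_le
  intro i _
  refine (MvPolynomial.totalDegree_mul _ _).trans ?_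
  rw [MvPolynomial.totalDegree_C, add_zero, MvPolynomial.totalDegree_X]

lemma YB_mul_mem (Hs : Submonoid (Matrix (Fin n) (Fin n) F)) (D : ℕ)
    {m : Matrix (Fin n) (Fin n) K} (hm : m ∈ YB K Hs D) {h : Matrix (Fin n) (Fin n) F} (hh : h ∈ Hs) :
    m * h.map (algebraMap F K) ∈ YB K Hs D := by
  intro f hf hv
  let g : Fin n × Fin n → MvPolynomial (Fin n × Fin n) K := fun ij =>
    ∑ k, MvPolynomial.X (ij.1, k) * MvPolynomial.C (algebraMap F K (h k ij.2))
  have key : ∀ m' : Matrix (Fin n) (Fin n) K,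
      evm m' (MvPolynomial.bind₁ g f) = evm (m' * h.map (algebraMap F K)) f := by
    intro m'
    rw [evm, evm_bind]
    congr 1
    ext i j
    simp [g, Matrix.mul_apply]
  rw [← key]
  apply hm
  · exact (totalDegree_bind_le g (fun ij => totalDegree_lin _ _ _) f).trans hf
  · intro h' hh'
    rw [key, ← Matrix.map_mul]
    exact hv _ (Hs.mul_mem hh' hh)

lemma one_mem_YB (Hs : Submonoid (Matrix (Fin n) (Fin n) F)) (D : ℕ) : (1 : Matrix _ _ K) ∈ YB K Hs D := by
  intro f _ hv
  have := hv 1 Hs.one_mem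
  rwa [Matrix.map_one _ (map_zero _) (map_one _)] at this

lemma YB_lim (Hs : Submonoid (Matrix (Fin n) (Fin n) F)) (D : ℕ) [Infinite K]
    (γ : Matrix (Fin n) (Fin n) (Polynomial K))
    (h : ∀ t : K, t ≠ 0 → γ.map (Polynomial.eval t) ∈ YB K Hs D) :
    γ.map (Polynomial.eval 0) ∈ YB K Hs D := by
  intro f hf hv
  let p : Polynomial K := MvPolynomial.eval₂ Polynomial.C (fun ij : Fin n × Fin n => γ ij.1 ij.2) f
  have hp : ∀ t, Polynomial.eval t p = evm (γ.map (Polynomial.eval t)) f := by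
    intro t
    have h1 := MvPolynomial.eval₂_comp_left (Polynomial.evalRingHom t) Polynomial.C
      (fun ij : Fin n × Fin n => γ ij.1 ij.2) f
    have h2 : (Polynomial.evalRingHom t).comp Polynomial.C = RingHom.id K := by
      ext x; simp
    rw [h2] at h1
    exact h1
  have hp0 : p = 0 := by
    apply Polynomial.eq_zero_of_infinite_isRoot
    apply Set.Infinite.mono (s := {0}ᶜ)
    · intro t ht
      exact (hp t).trans (h t ht f hf hv)
    · exact (Set.finite_singleton (0:K)).infinite_compl
  rw [← hp, hp0, Polynomial.eval_zero]

lemma YB_gal (Hs : Submonoid (Matrix (Fin n) (Fin n) F)) (D : ℕ) (τ : K ≃ₐ[F] K)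
    {m : Matrix (Fin n) (Fin n) K} (hm : m ∈ YB K Hs D) : m.map τ ∈ YB K Hs D := by
  intro f hf hv
  have key : ∀ (τ : K ≃ₐ[F] K) (m : Matrix (Fin n) (Fin n) K) (f : MvPolynomial (Fin n × Fin n) K),
      evm (m.map τ) (MvPolynomial.map (τ : K →+* K) f) = τ (evm m f) := by
    intro τ m f
    have := MvPolynomial.eval₂_comp_left (τ : K →+* K) (RingHom.id K) (fun ij : Fin n × Fin n => m ij.1 ij.2) f
    rw [evm, MvPolynomial.eval_map]
    exact this.symm
  have hback : MvPolynomial.map (τ : K →+* K) (MvPolynomial.map (τ.symm : K →+* K) f) = f := by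
    rw [MvPolynomial.map_map]
    have : ((τ : K →+* K).comp (τ.symm : K →+* K)) = RingHom.id K := by
      ext x; simp
    rw [this, MvPolynomial.map_id]
  rw [← hback, key, hm, map_zero]
  · exact (Finset.sup_mono (MvPolynomial.support_map_subset _ _)).trans hf
  · intro h hh
    have h1 : h.map (algebraMap F K) = (h.map (algebraMap F K)).map τ.symm := by
      ext i j; simp
    rw [h1, key, hv h hh, map_zero]

lemma YB_torus [Fintype F] (hn : 0 < n) (Hs : Submonoid (Matrix (Fin n) (Fin n) F)) (D : ℕ)
    {L : Type*} [Field L] [Algebra F L] (b : Module.Basis (Fin n) F L) (A : Finset L)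
    (hA : ∀ l ∈ A, Algebra.leftMulMatrix b l ∈ Hs) (hD : D * Fintype.card F ^ (n - 1) < A.card)
    {m : Matrix (Fin n) (Fin n) K} (hm : m ∈ YB K Hs D) (c : Fin n → K) :
    m * (∑ i, c i • (Algebra.leftMulMatrix b (b i)).map (algebraMap F K)) ∈ YB K Hs D := by
  classical
  intro f hf hv
  let g : Fin n × Fin n → MvPolynomial (Fin n) K := fun ij =>
    ∑ k, MvPolynomial.X k * MvPolynomial.C
      ((m * (Algebra.leftMulMatrix b (b k)).map (algebraMap F K)) ij.1 ij.2)
  have key : ∀ c, MvPolynomial.eval c (MvPolynomial.bind₁ g f) =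
      evm (m * (∑ i, c i • (Algebra.leftMulMatrix b (b i)).map (algebraMap F K))) f := by
    intro c
    rw [evm_bind]
    congr 1
    ext i j
    rw [Matrix.mul_sum, Matrix.sum_apply]
    simp [g, Matrix.mul_smul]
  rw [← key]
  have h0 : MvPolynomial.bind₁ g f = 0 := by
    apply sz_fin (F := F) hn _ D
      ((totalDegree_bind_le g (fun ij => totalDegree_lin _ (fun k => k) _) f).trans hf)
      (A.map b.equivFun.toEquiv.toEmbedding) (by rwa [Finset.card_map])
    intro c hc
    rw [Finset.mem_map] at hc
    obtain ⟨l, hl, rfl⟩ := hc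
    rw [key]
    have : (∑ i, algebraMap F K (b.equivFun l i) •
        (Algebra.leftMulMatrix b (b i)).map (algebraMap F K)) =
        (Algebra.leftMulMatrix b l).map (algebraMap F K) := by
      conv_rhs => rw [← b.sum_equivFun l, map_sum]
      ext i j
      simp only [Matrix.sum_apply, Matrix.map_apply, Matrix.smul_apply, map_smul, map_sum, smul_eq_mul, map_mul]
    exact (congrArg (fun M => evm (m * M) f) this).trans (YB_mul_mem Hs D hm (hA l hl) f hf hv)
  rw [h0, map_zero]

end core

section core2
variable {F K L : Type*} [Field F] [Fintype F] [Field K] [Algebra F K] [Field L] [Algebra F L] {n : ℕ}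

lemma exists_PQ [IsAlgClosed K] [FiniteDimensional F L] [Fintype (L →ₐ[F] K)] [DecidableEq (L →ₐ[F] K)]
    (b : Module.Basis (Fin n) F L) :
    ∃ Q : Matrix (Fin n) (L →ₐ[F] K) K,
      (Matrix.of (fun (σ : L →ₐ[F] K) (j : Fin n) => σ (b j))) * Q = 1 ∧
      Q * (Matrix.of (fun (σ : L →ₐ[F] K) (j : Fin n) => σ (b j))) = 1 := by
  classical
  have hcard : Fintype.card (L →ₐ[F] K) = n := by
    have h1 : Fintype.card (L →ₐ[F] K) = Module.finrank F L := by
      convert AlgHom.card F L K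
    rwa [Module.finrank_eq_card_basis b, Fintype.card_fin] at h1
  let e : Fin n ≃ (L →ₐ[F] K) := (Fintype.equivFinOfCardEq hcard).symm
  let M : Matrix (Fin n) (Fin n) K := (Algebra.embeddingsMatrixReindex F K b e).transpose
  have hM : IsUnit M.det := by
    rw [isUnit_iff_ne_zero, Matrix.det_transpose]
    intro h0
    have h1 := Algebra.discr_eq_det_embeddingsMatrixReindex_pow_two F K b e
    rw [h0, zero_pow two_ne_zero] at h1
    exact Algebra.discr_not_zero_of_basis F b ((algebraMap F K).injective (by rw [h1, map_zero]))
  have hP : (Matrix.of (fun (σ : L →ₐ[F] K) (j : Fin n) => σ (b j))) = M.submatrix e.symm id := by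
    ext σ j
    simp [M, Algebra.embeddingsMatrixReindex, Algebra.embeddingsMatrix]
  refine ⟨M⁻¹.submatrix id e.symm, ?_, ?_⟩
  · rw [hP, ← Matrix.submatrix_mul _ _ _ id _ Function.bijective_id, Matrix.mul_nonsing_inv _ hM]
    exact Matrix.submatrix_one_equiv e.symm
  · rw [hP, Matrix.submatrix_mul_equiv, Matrix.nonsing_inv_mul _ hM]
    rfl

lemma exists_gal [Normal F K] [FiniteDimensional F L] (σ σ' : L →ₐ[F] K) :
    ∃ τ : K ≃ₐ[F] K, (τ : K →ₐ[F] K).comp σ = σ' := by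
  obtain ⟨α, hα⟩ := Field.exists_primitive_element F L
  have hint : IsIntegral F α := IsIntegral.of_finite F α
  obtain ⟨τ, hτ⟩ := minpoly.exists_algEquiv_of_root (K := F) (L := K) (x := σ α) (y := σ' α)
    ((hint.map σ').isAlgebraic) (by
      rw [minpoly.algHom_eq σ' σ'.injective]
      rw [Polynomial.aeval_algHom_apply, minpoly.aeval, map_zero])
  refine ⟨τ, ?_⟩
  have hadj : Algebra.adjoin F {α} = ⊤ := by
    rw [← IntermediateField.adjoin_simple_toSubalgebra_of_isAlgebraic hint.isAlgebraic, hα]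
    rfl
  apply AlgHom.ext_of_adjoin_eq_top hadj
  intro x hx
  rw [Set.mem_singleton_iff] at hx
  rw [hx]
  exact hτ

theorem core_thm [IsAlgClosed K] [Normal F K] [FiniteDimensional F L] (hn : 0 < n)
    (Hs : Submonoid (Matrix (Fin n) (Fin n) F)) (D : ℕ)
    (b : Module.Basis (Fin n) F L) (A : Finset L)
    (hA : ∀ l ∈ A, Algebra.leftMulMatrix b l ∈ Hs) (hD : D * Fintype.card F ^ (n - 1) < A.card)
    (x x' : Matrix (Fin n) (Fin n) F) (hx : x ∈ Hs) (hx' : x' ∈ Hs) (hxx : x * x' = 1)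
    (v : Fin n → F) (hv : v ≠ 0) (μ : F) (hxv : x.mulVec v = μ • v)
    (e : Fin n → K)
    (he : ∀ w : Fin n → K, (∀ j : ℕ, dotProduct e
      ((((x.map (algebraMap F K)) ^ n.factorial) ^ j).mulVec w) = 0) → w = 0)
    (f : MvPolynomial (Fin n × Fin n) K) (hf : f.totalDegree ≤ D) (hvan : VanOn Hs f) : f = 0 := by
  classical
  have : Infinite K := IsAlgClosed.instInfinite
  let _ : Fintype (L →ₐ[F] K) := Fintype.ofFinite _
  have hcard : Fintype.card (L →ₐ[F] K) = n := by
    have h1 : Fintype.card (L →ₐ[F] K) = Module.finrank F L := by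
      convert AlgHom.card F L K
    rwa [Module.finrank_eq_card_basis b, Fintype.card_fin] at h1
  obtain ⟨Q, hPQ, hQP⟩ := exists_PQ (K := K) b
  set P : Matrix (L →ₐ[F] K) (Fin n) K := Matrix.of (fun (σ : L →ₐ[F] K) (j : Fin n) => σ (b j)) with hPdef
  let S : Submonoid (Matrix (L →ₐ[F] K) (L →ₐ[F] K) K) :=
    { carrier := {s | ∀ m ∈ YB K Hs D, m * (Q * s * P) ∈ YB K Hs D}
      one_mem' := by
        intro m hm
        rw [Matrix.mul_one, hQP, mul_one]
        exact hm
      mul_mem' := by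
        intro s t hs ht m hm
        have : m * (Q * (s * t) * P) = (m * (Q * s * P)) * (Q * t * P) := by
          calc m * (Q * (s * t) * P) = m * (Q * (s * 1 * t) * P) := by rw [Matrix.mul_one]
            _ = _ := by rw [← hPQ]; simp only [Matrix.mul_assoc]
        rw [this]
        exact ht _ (hs m hm) }
  have hS : ∀ s, s ∈ S ↔ ∀ m ∈ YB K Hs D, m * (Q * s * P) ∈ YB K Hs D := fun s => Iff.rfl
  have hHS : ∀ h ∈ Hs, P * h.map (algebraMap F K) * Q ∈ S := by
    intro h hh
    rw [hS]
    intro m hm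
    have : Q * (P * h.map (algebraMap F K) * Q) * P = h.map (algebraMap F K) := by
      calc Q * (P * h.map (algebraMap F K) * Q) * P = (Q * P) * h.map (algebraMap F K) * (Q * P) := by
            simp only [Matrix.mul_assoc]
        _ = _ := by rw [hQP, Matrix.one_mul, Matrix.mul_one]
    rw [this]
    exact YB_mul_mem Hs D hm hh
  have htop : ∀ s, s ∈ S := by
    apply absS_top S (g := P * x.map (algebraMap F K) * Q) (g' := P * x'.map (algebraMap F K) * Q)
      (hg := hHS x hx) (hg' := hHS x' hx') (w := P.mulVec (fun i => algebraMap F K (v i)))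
      (μ := algebraMap F K μ) (e := Matrix.vecMul e Q) (N := n.factorial) (hN := by rw [hcard])
    · -- diag
      intro d
      rw [hS]
      intro m hm
      have hdg : Q * Matrix.diagonal d * P =
          ∑ i, (Q.mulVec d) i • (Algebra.leftMulMatrix b (b i)).map (algebraMap F K) := by
        have h1 : ∀ i, P * (Algebra.leftMulMatrix b (b i)).map (algebraMap F K) =
            Matrix.diagonal (fun σ : L →ₐ[F] K => σ (b i)) * P := by
          intro i
          ext σ j
          rw [Matrix.diagonal_mul, Matrix.mul_apply]
          simp only [hPdef, Matrix.of_apply, Matrix.map_apply]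
          rw [← map_mul]
          conv_rhs => rw [← b.sum_repr (b i * b j), map_sum]
          apply Finset.sum_congr rfl
          intro k _
          rw [Algebra.leftMulMatrix_eq_repr_mul, map_smul, Algebra.smul_def, mul_comm]
        have h2 : P * ∑ i, (Q.mulVec d) i • (Algebra.leftMulMatrix b (b i)).map (algebraMap F K) =
            Matrix.diagonal d * P := by
          rw [Matrix.mul_sum]
          simp only [Matrix.mul_smul, h1]
          have h3 : P.mulVec (Q.mulVec d) = d := by
            rw [Matrix.mulVec_mulVec, hPQ, Matrix.one_mulVec]
          ext σ j
          rw [Matrix.sum_apply, Matrix.diagonal_mul]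
          conv_rhs => rw [← h3]
          simp only [Matrix.smul_apply, Matrix.diagonal_mul, smul_eq_mul]
          rw [Matrix.mulVec, dotProduct, Finset.sum_mul]
          apply Finset.sum_congr rfl
          intro i _
          simp only [hPdef, Matrix.of_apply]
          ring
        rw [Matrix.mul_assoc, ← h2, ← Matrix.mul_assoc, hQP, Matrix.one_mul]
      rw [hdg]
      exact YB_torus hn Hs D b A hA hD hm _
    · -- lim
      intro γ hγ
      rw [hS]
      intro m hm
      have h1 : ∀ t : K, ((m.map Polynomial.C) * ((Q.map Polynomial.C) * γ * (P.map Polynomial.C))).map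
          (Polynomial.eval t) = m * (Q * γ.map (Polynomial.eval t) * P) := by
        intro t
        rw [← Polynomial.coe_evalRingHom, Matrix.map_mul, Matrix.map_mul, Matrix.map_mul]
        congr 1
        · ext i j; simp
        · congr 1
          · congr 1
            ext i j; simp
          · ext i j; simp
      rw [← h1]
      apply YB_lim
      intro t ht
      rw [h1]
      exact (hS _).1 (hγ t ht) m hm
    · -- symmetry
      intro σ σ'
      obtain ⟨τ, hτ⟩ := exists_gal σ σ'
      let π : Equiv.Perm (L →ₐ[F] K) :=
        ⟨fun ρ => (τ : K →ₐ[F] K).comp ρ, fun ρ => (τ.symm : K →ₐ[F] K).comp ρ,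
          fun ρ => by ext; simp, fun ρ => by ext; simp⟩
      refine ⟨π, hτ, ?_⟩
      have hτP : P.map τ = P.submatrix π id := by
        ext ρ j
        rfl
      have hτQ : Q.map τ = Q.submatrix id π := by
        have h1 : P.submatrix π id * Q.submatrix id π = 1 := by
          rw [← Matrix.submatrix_mul _ _ _ id _ Function.bijective_id, hPQ]
          exact Matrix.submatrix_one_equiv π
        have h2 : Q.map τ * P.map τ = 1 := by
          rw [← Matrix.map_mul, hQP, Matrix.map_one _ (map_zero _) (map_one _)]
        calc Q.map τ = Q.map τ * (P.submatrix π id * Q.submatrix id π) := by rw [h1, Matrix.mul_one]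
          _ = _ := by rw [← Matrix.mul_assoc, ← hτP, h2, Matrix.one_mul]
      have hSτ : ∀ s ∈ S, (s.map τ).submatrix π.symm π.symm ∈ S := by
        intro s hs
        rw [hS]
        intro m hm
        have h1 : Q * (s.map τ).submatrix π.symm π.symm * P = (Q * s * P).map τ := by
          rw [Matrix.map_mul, Matrix.map_mul, hτP, hτQ]
          have e1 : Q = (Q.submatrix id π).submatrix id π.symm := by ext; simp
          have e2 : P = (P.submatrix π id).submatrix π.symm id := by ext; simp
          conv_lhs => rw [e1, e2]
          rw [Matrix.submatrix_mul_equiv, Matrix.submatrix_mul_equiv]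
          rfl
        have h2 : m * (Q * (s.map τ).submatrix π.symm π.symm * P) = (m.map τ.symm * (Q * s * P)).map τ := by
          have e3 : (m.map τ.symm).map τ = m := by ext i j; simp
          have e4 : (m.map τ.symm * (Q * s * P)).map τ = (m.map τ.symm).map τ * (Q * s * P).map τ :=
            Matrix.map_mul
          rw [h1, e4, e3]
        rw [h2]
        exact YB_gal Hs D τ ((hS s).1 hs _ (YB_gal Hs D τ.symm hm))
      intro a c hac
      rcases hac with rfl | hac
      · exact Or.inl rfl
      right
      intro r
      have h1 := hSτ _ (hac (τ.symm r))
      have h2 : ((1 + Matrix.single a c (τ.symm r) : Matrix _ _ K).map τ).submatrix π.symm π.symm =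
          1 + Matrix.single (π a) (π c) r := by
        ext i j
        obtain ⟨i, rfl⟩ := π.surjective i
        obtain ⟨j, rfl⟩ := π.surjective j
        simp only [Matrix.submatrix_apply, Matrix.map_apply, Matrix.add_apply, map_add, Matrix.one_apply,
          Matrix.single_apply, EmbeddingLike.apply_eq_iff_eq, Equiv.symm_apply_apply, apply_ite τ, map_one,
          map_zero, AlgEquiv.apply_symm_apply]
      rwa [h2] at h1
    · calc P * x.map (algebraMap F K) * Q * (P * x'.map (algebraMap F K) * Q)
          = P * x.map (algebraMap F K) * (Q * P) * (x'.map (algebraMap F K) * Q) := by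
            simp only [Matrix.mul_assoc]
        _ = P * ((x * x').map (algebraMap F K)) * Q := by
            rw [hQP, Matrix.mul_one, Matrix.map_mul]
            simp only [Matrix.mul_assoc]
        _ = 1 := by
            rw [hxx, Matrix.map_one _ (map_zero _) (map_one _), Matrix.mul_one, hPQ]
    · intro σ
      have : P.mulVec (fun i => algebraMap F K (v i)) σ = σ (∑ i, v i • b i) := by
        rw [map_sum, Matrix.mulVec, dotProduct]
        apply Finset.sum_congr rfl
        intro i _
        rw [map_smul, Algebra.smul_def, mul_comm]
        rfl
      rw [this]
      intro h0
      have h1 : ∑ i, v i • b i = 0 := σ.injective (h0.trans (map_zero σ).symm)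
      apply hv
      ext i
      exact Fintype.linearIndependent_iff.1 b.linearIndependent v h1 i
    · have h1 : (x.map (algebraMap F K)).mulVec (fun i => algebraMap F K (v i)) =
          (algebraMap F K μ) • (fun i => algebraMap F K (v i)) := by
        ext i
        have := congrArg (algebraMap F K) (congrFun hxv i)
        simp only [Matrix.mulVec, dotProduct, map_sum, map_mul, Pi.smul_apply, smul_eq_mul, Matrix.map_apply] at this ⊢
        exact this
      calc (P * x.map (algebraMap F K) * Q).mulVec (P.mulVec (fun i => algebraMap F K (v i)))
          = (P * x.map (algebraMap F K) * (Q * P)).mulVec (fun i => algebraMap F K (v i)) := by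
            rw [Matrix.mulVec_mulVec, Matrix.mul_assoc _ Q P]
        _ = P.mulVec ((x.map (algebraMap F K)).mulVec (fun i => algebraMap F K (v i))) := by
            rw [hQP, Matrix.mul_one, Matrix.mulVec_mulVec]
        _ = _ := by rw [h1, Matrix.mulVec_smul]
    · intro w' hw'
      have hpow : ∀ (y : Matrix (Fin n) (Fin n) K) (k : ℕ), (P * y * Q) ^ k = P * y ^ k * Q := by
        intro y k
        induction k with
        | zero => rw [pow_zero, pow_zero, Matrix.mul_one, hPQ]
        | succ k ih =>
          rw [pow_succ, ih, pow_succ]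
          calc P * y ^ k * Q * (P * y * Q) = P * y ^ k * (Q * P) * (y * Q) := by
                simp only [Matrix.mul_assoc]
            _ = _ := by
                rw [hQP, Matrix.mul_one]
                simp only [Matrix.mul_assoc]
      have h0 : Q.mulVec w' = 0 := by
        apply he
        intro j
        rw [← hw' j, hpow, hpow]
        rw [← Matrix.dotProduct_mulVec, Matrix.mulVec_mulVec, Matrix.mulVec_mulVec]
        congr 2
        calc _ = (Q * P) * ((x.map (algebraMap F K)) ^ n.factorial) ^ j * Q := by
              rw [hQP, Matrix.one_mul]
          _ = _ := by simp only [Matrix.mul_assoc]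
      rw [← Matrix.one_mulVec w', ← hPQ, ← Matrix.mulVec_mulVec, h0, Matrix.mulVec_zero]
  apply MvPolynomial.funext
  intro c
  rw [map_zero]
  let m : Matrix (Fin n) (Fin n) K := Matrix.of (fun i j => c (i, j))
  have h1 := (hS _).1 (htop (P * m * Q)) 1 (one_mem_YB Hs D)
  have h2 : Q * (P * m * Q) * P = m := by
    calc Q * (P * m * Q) * P = (Q * P) * m * (Q * P) := by simp only [Matrix.mul_assoc]
      _ = m := by rw [hQP, Matrix.one_mul, Matrix.mul_one]
  rw [h2, one_mul] at h1
  exact h1 f hf hvan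

end core2

section sizes
variable {F : Type*} [Field F] [Fintype F] {n : ℕ}

lemma card_GL_eq (hn : 0 < n) : Nat.card (Matrix.GeneralLinearGroup (Fin n) F) =
    (Fintype.card F - 1) * Nat.card (Matrix.SpecialLinearGroup (Fin n) F) := by
  classical
  let φ : Matrix.GeneralLinearGroup (Fin n) F →* Fˣ := Matrix.GeneralLinearGroup.det
  have hsurj : Function.Surjective φ := by
    intro c
    let d : Fin n → F := fun i => if i = ⟨0, hn⟩ then (c : F) else 1
    have hd : (Matrix.diagonal d).det = (c : F) := by
      rw [Matrix.det_diagonal, Finset.prod_ite_eq' Finset.univ]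
      simp
    refine ⟨Matrix.GeneralLinearGroup.mkOfDetNeZero (Matrix.diagonal d) (by rw [hd]; exact c.ne_zero), ?_⟩
    ext
    exact hd
  have h1 := Subgroup.card_mul_index φ.ker
  rw [Subgroup.index_ker, MonoidHom.range_eq_top.2 hsurj, Subgroup.card_top,
    Nat.card_eq_fintype_card (α := Fˣ), Fintype.card_units] at h1
  rw [← h1, mul_comm]
  congr 1
  apply Nat.card_congr
  refine Equiv.ofBijective (fun k => (⟨(k.1 : Matrix (Fin n) (Fin n) F), ?_⟩ :
    Matrix.SpecialLinearGroup (Fin n) F)) ⟨?_, ?_⟩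
  · have := congrArg (Units.val) (MonoidHom.mem_ker.1 k.2)
    exact this
  · intro a b hab
    apply Subtype.ext
    apply Units.ext
    exact congrArg Subtype.val hab
  · intro s
    refine ⟨⟨(s : Matrix.GeneralLinearGroup (Fin n) F), ?_⟩, ?_⟩
    · rw [MonoidHom.mem_ker]
      exact Matrix.SpecialLinearGroup.coeToGL_det s
    · rfl

lemma card_GL_le : Nat.card (Matrix.GeneralLinearGroup (Fin n) F) ≤ Fintype.card F ^ (n ^ 2) := by
  have h := Nat.card_le_card_of_injective
    (fun g : Matrix.GeneralLinearGroup (Fin n) F => (g : Matrix (Fin n) (Fin n) F)) Units.val_injective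
  refine h.trans_eq ?_
  have : Nat.card (Matrix (Fin n) (Fin n) F) = Nat.card (Fin n → Fin n → F) := rfl
  rw [this, Nat.card_eq_fintype_card, Fintype.card_fun, Fintype.card_fun, Fintype.card_fin, ← pow_mul, sq]

lemma card_ge_of_no_poly {K : Type*} [Field K] [Algebra F K]
    (Hs : Submonoid (Matrix (Fin n) (Fin n) F)) (d : ℕ)
    (h : ∀ f : MvPolynomial (Fin n × Fin n) K, f.totalDegree ≤ n ^ 2 * d → VanOn Hs f → f = 0) :
    (d + 1) ^ (n ^ 2) ≤ Nat.card Hs := by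
  classical
  have : Finite Hs := Finite.of_injective (fun h : Hs => h.1) Subtype.val_injective
  let _ : Fintype Hs := Fintype.ofFinite _
  let I := (Fin n × Fin n → Fin (d + 1))
  let ex : I → (Fin n × Fin n →₀ ℕ) := fun e => Finsupp.equivFunOnFinite.symm (fun ij => (e ij : ℕ))
  have hex : Function.Injective ex := by
    intro a b hab
    ext ij
    exact congrFun (Finsupp.equivFunOnFinite.symm.injective hab) ij
  let P : (I → K) → MvPolynomial (Fin n × Fin n) K := fun c => ∑ e, MvPolynomial.monomial (ex e) (c e)
  let Φ : (I → K) →ₗ[K] (Hs → K) :=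
    { toFun := fun c h => evm (h.1.map (algebraMap F K)) (P c)
      map_add' := by
        intro c c'
        ext h
        simp only [P, evm, Pi.add_apply, map_add, Finset.sum_add_distrib]
      map_smul' := by
        intro r c
        ext h
        simp only [P, evm, Pi.smul_apply, smul_eq_mul, RingHom.id_apply, map_sum, Finset.mul_sum,
          MvPolynomial.eval_monomial, mul_assoc] }
  have hinj : Function.Injective Φ := by
    rw [← LinearMap.ker_eq_bot, LinearMap.ker_eq_bot']
    intro c hc
    have hP : P c = 0 := by
      apply h
      · apply MvPolynomial.totalDegree_finsetSum_le
        intro e _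
        refine (MvPolynomial.totalDegree_monomial_le _ _).trans ?_
        rw [Finsupp.sum_fintype _ _ (fun _ => rfl)]
        calc ∑ ij, (ex e) ij ≤ ∑ ij : Fin n × Fin n, d := by
              apply Finset.sum_le_sum
              intro ij _
              exact Nat.lt_succ_iff.1 (e ij).2
          _ = n ^ 2 * d := by simp [sq]
      · intro x hx
        exact congrFun hc ⟨x, hx⟩
    ext e
    have := congrArg (MvPolynomial.coeff (ex e)) hP
    simp only [P, MvPolynomial.coeff_sum, MvPolynomial.coeff_monomial, MvPolynomial.coeff_zero] at this
    rw [Finset.sum_eq_single e] at this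
    · simpa using this
    · intro b _ hb
      exact if_neg (fun hh => hb (hex hh))
    · simp
  have h2 := LinearMap.finrank_le_finrank_of_injective hinj
  rw [Module.finrank_fintype_fun_eq_card, Module.finrank_fintype_fun_eq_card] at h2
  rw [Nat.card_eq_fintype_card]
  refine le_trans (le_of_eq ?_) h2
  simp [I, sq]

/-- Krylov condition -/
def Kry (x : Matrix (Fin n) (Fin n) F) : Prop :=
  ∃ e : Fin n → AlgebraicClosure F, ∀ w : Fin n → AlgebraicClosure F, (∀ j : ℕ, dotProduct e
      ((((x.map (algebraMap F (AlgebraicClosure F))) ^ n.factorial) ^ j).mulVec w) = 0) → w = 0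

def HasEv (x : Matrix (Fin n) (Fin n) F) : Prop :=
  ∃ v : Fin n → F, v ≠ 0 ∧ ∃ μ : F, x.mulVec v = μ • v

lemma HasEv.conj {x g g' : Matrix (Fin n) (Fin n) F} (hg : g * g' = 1) (h : HasEv x) :
    HasEv (g * x * g') := by
  obtain ⟨v, hv, μ, hx⟩ := h
  have hg2 : g' * g = 1 := mul_eq_one_comm.1 hg
  refine ⟨g.mulVec v, ?_, μ, ?_⟩
  · intro h0
    apply hv
    rw [← Matrix.one_mulVec v, ← hg2, ← Matrix.mulVec_mulVec, h0, Matrix.mulVec_zero]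
  · rw [Matrix.mulVec_mulVec, Matrix.mul_assoc, hg2, Matrix.mul_one, ← Matrix.mulVec_mulVec, hx,
      Matrix.mulVec_smul]

lemma Kry.conj {x g g' : Matrix (Fin n) (Fin n) F} (hg : g * g' = 1) (h : Kry x) :
    Kry (g * x * g') := by
  obtain ⟨e, he⟩ := h
  let G := g.map (algebraMap F (AlgebraicClosure F))
  let G' := g'.map (algebraMap F (AlgebraicClosure F))
  have hG : G * G' = 1 := by
    simp only [G, G']
    rw [← Matrix.map_mul, hg, Matrix.map_one _ (map_zero _) (map_one _)]
  have hG2 : G' * G = 1 := mul_eq_one_comm.1 hG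
  have hpow : ∀ (y : Matrix (Fin n) (Fin n) (AlgebraicClosure F)) (k : ℕ), (G * y * G') ^ k = G * y ^ k * G' := by
    intro y k
    induction k with
    | zero => rw [pow_zero, pow_zero, Matrix.mul_one, hG]
    | succ k ih =>
      rw [pow_succ, ih, pow_succ]
      calc G * y ^ k * G' * (G * y * G') = G * y ^ k * (G' * G) * (y * G') := by
            simp only [Matrix.mul_assoc]
        _ = _ := by
            rw [hG2, Matrix.mul_one]
            simp only [Matrix.mul_assoc]
  refine ⟨Matrix.vecMul e G', ?_⟩
  intro w hw
  have h0 : G'.mulVec w = 0 := by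
    apply he
    intro j
    rw [← hw j, Matrix.map_mul, Matrix.map_mul, hpow, hpow]
    rw [← Matrix.dotProduct_mulVec, Matrix.mulVec_mulVec, Matrix.mulVec_mulVec]
    congr 2
    calc _ = (G' * G) * ((x.map (algebraMap F (AlgebraicClosure F))) ^ n.factorial) ^ j * G' := by
          rw [hG2, Matrix.one_mul]
      _ = _ := by simp only [Matrix.mul_assoc]
  rw [← Matrix.one_mulVec w, ← hG, ← Matrix.mulVec_mulVec, h0, Matrix.mulVec_zero]

end sizes

section gen
variable {F L : Type*} [Field F] [Fintype F] [Field L] [Algebra F L] {n : ℕ}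

/-- scalar multiples of powers of `l` -/
noncomputable def ASet (F : Type*) [Field F] {L : Type*} [Field L] [Algebra F L] (l : L) : Set L :=
  {a | ∃ c : F, c ≠ 0 ∧ ∃ k : ℕ, a = c • l ^ k}

theorem gen_of_good [FiniteDimensional F L] (hn : 0 < n) (b : Module.Basis (Fin n) F L)
    (l : L) (g g' : Matrix (Fin n) (Fin n) F) (hg : g * g' = 1)
    (x1 x2 : Matrix.SpecialLinearGroup (Fin n) F)
    (hx1 : (x1 : Matrix (Fin n) (Fin n) F) = g * Algebra.leftMulMatrix b l * g')
    (hev : HasEv (x2 : Matrix (Fin n) (Fin n) F)) (hkr : Kry (x2 : Matrix (Fin n) (Fin n) F))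
    (hq : 100 ≤ Fintype.card F)
    (hT : (n ^ 2 * Fintype.card F ^ n) ^ (4 * n ^ 2) ≤
      Fintype.card F * (ASet F l).ncard ^ (4 * n ^ 2))
    (H : Subgroup (Matrix.SpecialLinearGroup (Fin n) F)) (h1 : x1 ∈ H) (h2 : x2 ∈ H) : H = ⊤ := by
  classical
  have hg2 : g' * g = 1 := mul_eq_one_comm.1 hg
  have : Finite L := Module.finite_of_finite F
  let _ : Fintype L := Fintype.ofFinite L
  let A : Finset L := (ASet F l).toFinset
  have hAc : (ASet F l).ncard = A.card := Set.ncard_eq_toFinset_card' _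
  rw [hAc] at hT
  set q := Fintype.card F with hqdef
  let Hs : Submonoid (Matrix (Fin n) (Fin n) F) :=
    { carrier := {m | ∃ c : F, c ≠ 0 ∧ ∃ h ∈ H, m = c • (g' * (h : Matrix (Fin n) (Fin n) F) * g)}
      one_mem' := ⟨1, one_ne_zero, 1, H.one_mem, by
        rw [Matrix.SpecialLinearGroup.coe_one, Matrix.mul_one, hg2, one_smul]⟩
      mul_mem' := by
        rintro _ _ ⟨c, hc, h, hh, rfl⟩ ⟨c', hc', h', hh', rfl⟩
        refine ⟨c * c', mul_ne_zero hc hc', h * h', H.mul_mem hh hh', ?_⟩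
        rw [smul_mul_smul_comm, Matrix.SpecialLinearGroup.coe_mul]
        congr 1
        calc g' * (h : Matrix (Fin n) (Fin n) F) * g * (g' * (h' : Matrix (Fin n) (Fin n) F) * g)
            = g' * (h : Matrix (Fin n) (Fin n) F) * (g * g') * ((h' : Matrix (Fin n) (Fin n) F) * g) := by
              simp only [Matrix.mul_assoc]
          _ = _ := by
              rw [hg, Matrix.mul_one]
              simp only [Matrix.mul_assoc] }
  have hHs : ∀ m, m ∈ Hs ↔ ∃ c : F, c ≠ 0 ∧ ∃ h ∈ H, m = c • (g' * (h : Matrix (Fin n) (Fin n) F) * g) :=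
    fun m => Iff.rfl
  have hconj : ∀ h ∈ H, g' * (h : Matrix (Fin n) (Fin n) F) * g ∈ Hs :=
    fun h hh => ⟨1, one_ne_zero, h, hh, by rw [one_smul]⟩
  have hA : ∀ a ∈ A, Algebra.leftMulMatrix b a ∈ Hs := by
    intro a ha
    rw [Set.mem_toFinset] at ha
    obtain ⟨c, hc, k, rfl⟩ := ha
    have hM : Algebra.leftMulMatrix b l ∈ Hs := by
      have := hconj x1 h1
      rw [hx1] at this
      have e : g' * (g * Algebra.leftMulMatrix b l * g') * g = Algebra.leftMulMatrix b l := by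
        calc _ = (g' * g) * Algebra.leftMulMatrix b l * (g' * g) := by simp only [Matrix.mul_assoc]
          _ = _ := by rw [hg2, Matrix.one_mul, Matrix.mul_one]
      rwa [e] at this
    obtain ⟨c', hc', h, hh, e⟩ := (hHs _).1 (Hs.pow_mem hM k)
    refine ⟨c * c', mul_ne_zero hc hc', h, hh, ?_⟩
    rw [map_smul, map_pow, e, smul_smul]
  -- size bound
  have hHcard : Nat.card Hs ≤ (q - 1) * Nat.card H := by
    let φ : Fˣ × H → Hs := fun p => ⟨(p.1 : F) • (g' * (p.2.1 : Matrix (Fin n) (Fin n) F) * g),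
      p.1, p.1.ne_zero, p.2.1, p.2.2, rfl⟩
    have hs : Function.Surjective φ := by
      rintro ⟨m, c, hc, h, hh, rfl⟩
      exact ⟨⟨Units.mk0 c hc, ⟨h, hh⟩⟩, rfl⟩
    have := Nat.card_le_card_of_surjective φ hs
    rwa [Nat.card_prod, Nat.card_eq_fintype_card (α := Fˣ), Fintype.card_units] at this
  have hA0 : 0 < A.card := Finset.card_pos.2 ⟨1, by
    rw [Set.mem_toFinset]; exact ⟨1, one_ne_zero, 0, by simp⟩⟩
  have hq0 : 0 < q := by omega
  have hB0 : 0 < n ^ 2 * q ^ (n - 1) := by positivity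
  let d := (A.card - 1) / (n ^ 2 * q ^ (n - 1))
  have hd1 : (n ^ 2 * d) * q ^ (n - 1) < A.card := by
    have : n ^ 2 * q ^ (n - 1) * d ≤ A.card - 1 := Nat.mul_div_le _ _
    have e : (n ^ 2 * d) * q ^ (n - 1) = n ^ 2 * q ^ (n - 1) * d := by ring
    omega
  have hd2 : A.card ≤ (n ^ 2 * q ^ (n - 1)) * (d + 1) := by
    have := Nat.lt_mul_div_succ (A.card - 1) hB0
    have e : (A.card - 1) / (n ^ 2 * q ^ (n - 1)) = d := rfl
    rw [e] at this
    omega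
  have hinv : g' * (x2 : Matrix (Fin n) (Fin n) F) * g *
      (g' * ((x2⁻¹ : Matrix.SpecialLinearGroup (Fin n) F) : Matrix (Fin n) (Fin n) F) * g) = 1 := by
    calc _ = g' * (x2 : Matrix (Fin n) (Fin n) F) * (g * g') *
          (((x2⁻¹ : Matrix.SpecialLinearGroup (Fin n) F) : Matrix (Fin n) (Fin n) F) * g) := by
          simp only [Matrix.mul_assoc]
      _ = g' * ((x2 * x2⁻¹ : Matrix.SpecialLinearGroup (Fin n) F) : Matrix (Fin n) (Fin n) F) * g := by
          rw [hg, Matrix.mul_one, Matrix.SpecialLinearGroup.coe_mul]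
          simp only [Matrix.mul_assoc]
      _ = 1 := by
          rw [mul_inv_cancel, Matrix.SpecialLinearGroup.coe_one, Matrix.mul_one, hg2]
  obtain ⟨v, hv, μ, hxv⟩ := hev.conj hg2
  obtain ⟨e, he⟩ := hkr.conj hg2
  have hsize := card_ge_of_no_poly (K := AlgebraicClosure F) Hs d (fun f hf hvan =>
    core_thm (K := AlgebraicClosure F) hn Hs (n ^ 2 * d) b A hA hd1 _ _ (hconj x2 h2)
      (hconj x2⁻¹ (H.inv_mem h2)) hinv v hv μ hxv e he f hf hvan)
  -- index
  have hI := Subgroup.card_mul_index H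
  have hGL := card_GL_eq (F := F) hn
  have hGL2 := card_GL_le (F := F) (n := n)
  rw [hGL] at hGL2
  apply eq_top_of_small_index hn H hq
  set I := H.index
  set T := A.card
  have hmain : I * T ^ (n ^ 2) ≤ (n ^ 2 * q ^ n) ^ (n ^ 2) := by
    calc I * T ^ (n ^ 2) ≤ I * ((n ^ 2 * q ^ (n - 1)) * (d + 1)) ^ (n ^ 2) := by gcongr
      _ = (n ^ 2 * q ^ (n - 1)) ^ (n ^ 2) * (I * (d + 1) ^ (n ^ 2)) := by rw [mul_pow]; ring
      _ ≤ (n ^ 2 * q ^ (n - 1)) ^ (n ^ 2) * (I * ((q - 1) * Nat.card H)) := by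
          gcongr
          exact hsize.trans hHcard
      _ = (n ^ 2 * q ^ (n - 1)) ^ (n ^ 2) * ((q - 1) * (Nat.card H * I)) := by ring
      _ ≤ (n ^ 2 * q ^ (n - 1)) ^ (n ^ 2) * q ^ (n ^ 2) := by
          gcongr
          rw [hI]; exact hGL2
      _ = (n ^ 2 * (q ^ (n - 1) * q)) ^ (n ^ 2) := by rw [← mul_pow]; ring
      _ = _ := by rw [← pow_succ, Nat.sub_add_cancel hn]
  have h4 : I ^ 4 * T ^ (4 * n ^ 2) ≤ q * T ^ (4 * n ^ 2) := by
    calc I ^ 4 * T ^ (4 * n ^ 2) = (I * T ^ (n ^ 2)) ^ 4 := by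
          rw [mul_pow, ← pow_mul]; ring_nf
      _ ≤ ((n ^ 2 * q ^ n) ^ (n ^ 2)) ^ 4 := Nat.pow_le_pow_left hmain 4
      _ = (n ^ 2 * q ^ n) ^ (4 * n ^ 2) := by rw [← pow_mul]; ring_nf
      _ ≤ _ := hT
  exact Nat.le_of_mul_le_mul_right h4 (by positivity)

end gen

section cnt1
variable {F L : Type*} [Field F] [Fintype F] [Field L] [Algebra F L] {n : ℕ}

lemma aset_card [Finite L] (hn : 0 < n) (hfr : Module.finrank F L = n) (l : L) (hl : Algebra.norm F l = 1) :
    (Fintype.card F - 1) * orderOf l ≤ n * (ASet F l).ncard := by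
  classical
  let _ : Fintype L := Fintype.ofFinite L
  rw [Set.ncard_eq_toFinset_card']
  have hl0 : l ≠ 0 := by
    rintro rfl
    have : FiniteDimensional F L := FiniteDimensional.of_finrank_pos (by omega)
    rw [Algebra.norm_zero] at hl
    exact zero_ne_one hl
  let s : Finset (Fˣ × ℕ) := Finset.univ ×ˢ Finset.range (orderOf l)
  let f : Fˣ × ℕ → L := fun p => (p.1 : F) • l ^ p.2
  have hs : s.card = (Fintype.card F - 1) * orderOf l := by
    rw [Finset.card_product, Finset.card_univ, Fintype.card_units, Finset.card_range]
  rw [← hs]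
  apply Finset.card_le_mul_card_image_of_maps_to (f := f)
  · rintro ⟨c, k⟩ _
    rw [Set.mem_toFinset]
    exact ⟨c, c.ne_zero, k, rfl⟩
  · intro a ha
    have h1 : (Finset.filter (fun p => f p = a) s).card ≤
        (Polynomial.nthRoots n (Algebra.norm F a)).toFinset.card := by
      apply Finset.card_le_card_of_injOn (fun p => (p.1 : F))
      · rintro ⟨c, k⟩ hp
        have hp2 : (c : F) • l ^ k = a := (Finset.mem_filter.1 hp).2
        rw [Finset.mem_coe, Multiset.mem_toFinset, Polynomial.mem_nthRoots hn, ← hp2, Algebra.smul_def,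
          map_mul, Algebra.norm_algebraMap, map_pow, hl, one_pow, mul_one, hfr]
      · rintro ⟨c, k⟩ hp ⟨c', k'⟩ hp' hcc
        have hp := Finset.mem_filter.1 (Finset.mem_coe.1 hp)
        have hp' := Finset.mem_filter.1 (Finset.mem_coe.1 hp')
        have hc : c = c' := Units.ext hcc
        subst hc
        have e : (c : F) • l ^ k = (c : F) • l ^ k' := hp.2.trans hp'.2.symm
        have e2 : l ^ k = l ^ k' := smul_right_injective L c.ne_zero e
        have k1 := Finset.mem_range.1 (Finset.mem_product.1 hp.1).2
        have k2 := Finset.mem_range.1 (Finset.mem_product.1 hp'.1).2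
        have e3 : k = k' := pow_injOn_Iio_orderOf (Set.mem_Iio.2 k1) (Set.mem_Iio.2 k2) e2
        rw [e3]
    exact h1.trans ((Multiset.toFinset_card_le _).trans (Polynomial.card_nthRoots n _))

lemma few_order [Fintype L] [DecidableEq L] (B : ℕ) :
    (Finset.univ.filter (fun l : L => l ≠ 0 ∧ orderOf l ≤ B)).card ≤
      (Fintype.card L - 1).divisors.card * B := by
  classical
  let D := (Fintype.card L - 1).divisors.filter (· ≤ B)
  have hsub : (Finset.univ.filter (fun l : L => l ≠ 0 ∧ orderOf l ≤ B)) ⊆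
      D.biUnion (fun d => Polynomial.nthRootsFinset d (1 : L)) := by
    intro l hl
    have h := (Finset.mem_filter.1 hl).2
    have h1 : orderOf l ∣ Fintype.card L - 1 := by
      apply orderOf_dvd_of_pow_eq_one
      exact FiniteField.pow_card_sub_one_eq_one l h.1
    have h2 : Fintype.card L - 1 ≠ 0 := by
      have := Fintype.one_lt_card (α := L)
      omega
    have h3 : 0 < orderOf l := Nat.pos_of_dvd_of_pos h1 (Nat.pos_of_ne_zero h2)
    rw [Finset.mem_biUnion]
    refine ⟨orderOf l, Finset.mem_filter.2 ⟨Nat.mem_divisors.2 ⟨h1, h2⟩, h.2⟩, ?_⟩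
    rw [Polynomial.mem_nthRootsFinset h3]
    exact pow_orderOf_eq_one l
  refine (Finset.card_le_card hsub).trans ((Finset.card_biUnion_le_card_mul _ _ B ?_).trans ?_)
  · intro d hd
    refine le_trans ?_ (Finset.mem_filter.1 hd).2
    rw [Polynomial.nthRootsFinset]
    exact (@Multiset.toFinset_card_le _ (Classical.decEq L) _).trans (Polynomial.card_nthRoots d _)
  · exact Nat.mul_le_mul_right _ (Finset.card_filter_le _ _)

lemma norm_ker_card [Fintype L] [DecidableEq L] [DecidableEq F] (hn : 0 < n) (hfr : Module.finrank F L = n) :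
    Fintype.card F ^ (n - 1) ≤ (Finset.univ.filter (fun l : L => Algebra.norm F l = 1)).card := by
  let φ : Lˣ →* Fˣ := Units.map (Algebra.norm F)
  have h1 := Subgroup.card_mul_index φ.ker
  rw [Subgroup.index_ker] at h1
  have h2 : Nat.card φ.range ≤ Fintype.card F - 1 := by
    rw [← Fintype.card_units (α := F), ← Nat.card_eq_fintype_card]
    exact Nat.card_le_card_of_injective _ (Subtype.val_injective)
  rw [Nat.card_eq_fintype_card (α := Lˣ), Fintype.card_units, Module.card_eq_pow_finrank (K := F), hfr] at h1
  have h3 : Nat.card φ.ker ≤ (Finset.univ.filter (fun l : L => Algebra.norm F l = 1)).card := by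
    rw [← Fintype.card_subtype, ← Nat.card_eq_fintype_card]
    refine Nat.card_le_card_of_injective (fun u : φ.ker => (⟨((u : Lˣ) : L),
      congrArg Units.val (MonoidHom.mem_ker.1 u.2)⟩ : {l : L // Algebra.norm F l = 1})) ?_
    intro u v huv
    exact Subtype.ext (Units.ext (congrArg Subtype.val huv))
  obtain ⟨m, rfl⟩ : ∃ m, n = m + 1 := ⟨n - 1, by omega⟩
  have hq : 1 < Fintype.card F := Fintype.one_lt_card
  refine le_trans ?_ h3
  have h4 : (Fintype.card F ^ (m+1) - 1) ≤ Nat.card φ.ker * (Fintype.card F - 1) := by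
    rw [← h1]; exact Nat.mul_le_mul_left _ h2
  generalize Nat.card φ.ker = k at *
  generalize Fintype.card F = q at *
  obtain ⟨r, rfl⟩ : ∃ r, q = r + 1 := ⟨q - 1, by omega⟩
  simp only [Nat.add_sub_cancel] at *
  have h5 : (r+1)^m * r ≤ k * r := by
    refine le_trans ?_ h4
    have := Nat.one_le_pow m (r+1) (by omega)
    rw [pow_succ]
    have : (r+1)^m * (r+1) = (r+1)^m * r + (r+1)^m := by ring
    omega
  exact Nat.le_of_mul_le_mul_right h5 (by omega)

lemma num_bound (n q C τ B K : ℕ) (hn : 0 < n) (hK : 0 < K) (hq : 0 < q) (h1 : q * B ^ K ≤ (2 * n ^ 3 * q ^ (n-1)) ^ K)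
    (h2 : τ ^ (2 * n * K) ≤ C * q ^ n) (h3 : C * (4 * n ^ 3) ^ (2 * n * K) ≤ q ^ n) :
    2 * (τ * B) ≤ q ^ (n - 1) := by
  by_contra hcon
  push Not at hcon
  have h4 : (q ^ (n-1)) ^ (2 * n * K) < (2 * (τ * B)) ^ (2 * n * K) :=
    Nat.pow_lt_pow_left hcon (by positivity)
  have h5 : (2 * (τ * B)) ^ (2 * n * K) * q ^ (2 * n) ≤ (q ^ (n-1)) ^ (2 * n * K) * q ^ (2 * n) := by
    calc (2 * (τ * B)) ^ (2 * n * K) * q ^ (2 * n)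
        = 2 ^ (2 * n * K) * τ ^ (2 * n * K) * (q * B ^ K) ^ (2 * n) := by
          rw [mul_pow, mul_pow, mul_pow q, ← pow_mul B, mul_comm K]; ring
      _ ≤ 2 ^ (2 * n * K) * (C * q ^ n) * ((2 * n ^ 3 * q ^ (n-1)) ^ K) ^ (2 * n) := by gcongr
      _ = (C * (4 * n ^ 3) ^ (2 * n * K)) * q ^ n * (q ^ (n-1)) ^ (2 * n * K) := by
          rw [← pow_mul, mul_comm K, mul_pow (2 * n^3), mul_pow 2, mul_pow 4, show (4:ℕ) = 2 * 2 by rfl, mul_pow 2 2]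
          ring
      _ ≤ q ^ n * q ^ n * (q ^ (n-1)) ^ (2 * n * K) := by gcongr
      _ = _ := by ring
  have := Nat.le_of_mul_le_mul_right h5 (by positivity)
  omega

def HTT (F : Type*) [Field F] [Fintype F] {L : Type*} [Field L] [Algebra F L] (n : ℕ) (l : L) : Prop :=
  (n ^ 2 * Fintype.card F ^ n) ^ (4 * n ^ 2) ≤ Fintype.card F * (ASet F l).ncard ^ (4 * n ^ 2)

lemma HTT_of_order [Finite L] (hn : 0 < n) (hfr : Module.finrank F L = n) (l : L) (hl : Algebra.norm F l = 1)
    (h : (2 * n ^ 3 * Fintype.card F ^ (n-1)) ^ (4 * n ^ 2) ≤ Fintype.card F * (orderOf l) ^ (4 * n ^ 2)) :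
    HTT F n l := by
  have h1 := aset_card hn hfr l hl
  have hq : 1 < Fintype.card F := Fintype.one_lt_card
  unfold HTT
  generalize (ASet F l).ncard = a at *
  generalize orderOf l = d at *
  generalize 4 * n ^ 2 = K at *
  generalize Fintype.card F = q at *
  have h2 : (2 * n) ^ K * (n ^ 2 * q ^ n) ^ K ≤ (2 * n) ^ K * (q * a ^ K) := by
    calc (2 * n) ^ K * (n ^ 2 * q ^ n) ^ K = q ^ K * (2 * n ^ 3 * q ^ (n-1)) ^ K := by
          rw [← mul_pow, ← mul_pow]
          obtain ⟨m, rfl⟩ : ∃ m, n = m + 1 := ⟨n - 1, by omega⟩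
          simp only [Nat.add_sub_cancel]
          congr 1
          ring
      _ ≤ q ^ K * (q * d ^ K) := by gcongr
      _ ≤ (2 * (q - 1)) ^ K * (q * d ^ K) := by
          gcongr
          omega
      _ = q * (2 * ((q - 1) * d)) ^ K := by
          rw [mul_pow 2, mul_pow 2, mul_pow (q-1)]; ring
      _ ≤ q * (2 * (n * a)) ^ K := by gcongr
      _ = _ := by rw [← mul_assoc 2 n a, mul_pow (2 * n)]; ring
  exact Nat.le_of_mul_le_mul_left h2 (by positivity)

end cnt1

lemma good_count (n : ℕ) (hn : 0 < n) : ∃ q0 : ℕ, ∀ (F L : Type) [Field F] [Fintype F] [Field L] [Algebra F L]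
    [Finite L], Module.finrank F L = n → q0 ≤ Fintype.card F →
    Fintype.card F ^ (n-1) ≤ 2 * Nat.card {l : L // Algebra.norm F l = 1 ∧ HTT F n l} := by
  classical
  obtain ⟨C, hC1, hC⟩ := divisor_bound (2 * n * (4 * n ^ 2))
  refine ⟨C * (4 * n ^ 3) ^ (2 * n * (4 * n ^ 2)), ?_⟩
  intro F L _ _ _ _ _ hfr hq0
  let _ : Fintype L := Fintype.ofFinite L
  have hq : 1 < Fintype.card F := Fintype.one_lt_card
  have hcL : Fintype.card L = Fintype.card F ^ n := by rw [Module.card_eq_pow_finrank (K := F), hfr]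
  have hL : 1 < Fintype.card L := Fintype.one_lt_card
  have hk := norm_ker_card (F := F) (L := L) hn hfr
  set q := Fintype.card F with hqd
  set X := 2 * n ^ 3 * q ^ (n-1) with hX
  have hX0 : 0 < X := by positivity
  set B := Nat.findGreatest (fun d => q * d ^ (4 * n ^ 2) < X ^ (4 * n ^ 2)) X with hB
  have hB1 : q * B ^ (4 * n ^ 2) < X ^ (4 * n ^ 2) := by
    have := @Nat.findGreatest_spec 0 (fun d => q * d ^ (4 * n ^ 2) < X ^ (4 * n ^ 2)) _ X (Nat.zero_le _)
      (by
        rw [zero_pow (by positivity), mul_zero]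
        positivity)
    exact this
  have hτ := hC (Fintype.card L - 1) (by omega)
  have hnum := num_bound n q C ((Fintype.card L - 1).divisors.card) B (4 * n ^ 2) hn (by positivity) (by omega)
    hB1.le (hτ.trans (Nat.mul_le_mul_left _ (by omega)))
    (hq0.trans (Nat.le_self_pow hn.ne' _))
  have hfew := few_order (L := L) B
  have hsub : (Finset.univ.filter (fun l : L => Algebra.norm F l = 1)) ⊆
      (Finset.univ.filter (fun l : L => Algebra.norm F l = 1 ∧ HTT F n l)) ∪
      (Finset.univ.filter (fun l : L => l ≠ 0 ∧ orderOf l ≤ B)) := by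
    intro l hl
    have hl1 : Algebra.norm F l = 1 := (Finset.mem_filter.1 hl).2
    rw [Finset.mem_union, Finset.mem_filter, Finset.mem_filter]
    by_cases hh : HTT F n l
    · exact Or.inl ⟨Finset.mem_univ _, hl1, hh⟩
    · refine Or.inr ⟨Finset.mem_univ _, ?_, ?_⟩
      · rintro rfl
        have : FiniteDimensional F L := FiniteDimensional.of_finrank_pos (by omega)
        rw [Algebra.norm_zero] at hl1
        exact zero_ne_one hl1
      · have h1 : q * (orderOf l) ^ (4 * n ^ 2) < X ^ (4 * n ^ 2) := by
          by_contra hcon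
          exact hh (HTT_of_order hn hfr l hl1 (not_lt.1 hcon))
        apply Nat.le_findGreatest (P := fun d => q * d ^ (4 * n ^ 2) < X ^ (4 * n ^ 2)) _ h1
        by_contra hcon
        have : X ^ (4 * n ^ 2) ≤ q * (orderOf l) ^ (4 * n ^ 2) := by
          calc X ^ (4 * n ^ 2) ≤ (orderOf l) ^ (4 * n ^ 2) := Nat.pow_le_pow_left (by omega) _
            _ ≤ q * (orderOf l) ^ (4 * n ^ 2) := Nat.le_mul_of_pos_left _ (by omega)
        omega
  have h1 := (Finset.card_le_card hsub).trans (Finset.card_union_le _ _)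
  rw [Nat.card_eq_fintype_card, Fintype.card_subtype]
  omega

section cnt1b
variable {F L : Type*} [Field F] [Fintype F] [Field L] [Algebra F L] {n : ℕ}

lemma span_pow_top [Finite L] (hn : 0 < n) (hfr : Module.finrank F L = n) (l : L) (h : HTT F n l) :
    Submodule.span F (Set.range (fun k : ℕ => l ^ k)) = ⊤ := by
  classical
  have hfd : FiniteDimensional F L := FiniteDimensional.of_finrank_pos (by omega)
  by_contra hne
  set S := Submodule.span F (Set.range (fun k : ℕ => l ^ k)) with hS
  have hlt : Module.finrank F S < n := by
    rw [← hfr]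
    exact Submodule.finrank_lt hne
  have hq : 1 < Fintype.card F := Fintype.one_lt_card
  have hA : (ASet F l).ncard ≤ Fintype.card F ^ (n - 1) := by
    have h1 : (ASet F l).ncard ≤ (S : Set L).ncard := by
      apply Set.ncard_le_ncard
      · rintro _ ⟨c, hc, k, rfl⟩
        exact S.smul_mem _ (Submodule.subset_span ⟨k, rfl⟩)
      · exact Set.toFinite _
    refine h1.trans ?_
    let _ : Fintype S := Fintype.ofFinite S
    have h2 : (S : Set L).ncard = Fintype.card F ^ Module.finrank F S := by
      rw [← Nat.card_coe_set_eq, ← Module.card_eq_pow_finrank (K := F) (V := S), ← Nat.card_eq_fintype_card]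
      rfl
    rw [h2]
    exact Nat.pow_le_pow_right (by omega) (by omega)
  unfold HTT at h
  have h3 : (Fintype.card F ^ n) ^ (4 * n ^ 2) ≤ Fintype.card F * (Fintype.card F ^ (n - 1)) ^ (4 * n ^ 2) :=
    calc (Fintype.card F ^ n) ^ (4 * n ^ 2) ≤ (n ^ 2 * Fintype.card F ^ n) ^ (4 * n ^ 2) := by
          apply Nat.pow_le_pow_left
          exact Nat.le_mul_of_pos_left _ (by positivity)
      _ ≤ _ := h
      _ ≤ _ := by gcongr
  rw [← pow_mul, ← pow_mul, ← pow_succ'] at h3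
  have h4 := (Nat.pow_le_pow_iff_right hq).1 h3
  obtain ⟨m, rfl⟩ : ∃ m, n = m + 1 := ⟨n - 1, by omega⟩
  simp only [Nat.add_sub_cancel] at h4
  nlinarith [Nat.zero_le (m^2)]

lemma lmm_coord (b : Module.Basis (Fin n) F L) (l a : L) :
    (Algebra.leftMulMatrix b l).mulVec (b.repr a) = b.repr (l * a) :=
  Algebra.leftMulMatrix_mulVec_repr b l a

lemma det_inj (b : Module.Basis (Fin n) F L) (l : L)
    (hs : Submodule.span F (Set.range (fun k : ℕ => l ^ k)) = ⊤)
    (g1 g2 x : Matrix (Fin n) (Fin n) F) (h1 : g1 * Algebra.leftMulMatrix b l = x * g1)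
    (h2 : g2 * Algebra.leftMulMatrix b l = x * g2)
    (h : g1.mulVec (b.repr 1) = g2.mulVec (b.repr 1)) : g1 = g2 := by
  have hk : ∀ k : ℕ, g1.mulVec (b.repr (l ^ k)) = g2.mulVec (b.repr (l ^ k)) := by
    intro k
    induction k with
    | zero => rw [pow_zero]; exact h
    | succ k ih =>
      rw [pow_succ', ← lmm_coord b l, Matrix.mulVec_mulVec, Matrix.mulVec_mulVec, h1, h2,
        ← Matrix.mulVec_mulVec, ← Matrix.mulVec_mulVec, ih]
  have hall : ∀ a : L, g1.mulVec (b.repr a) = g2.mulVec (b.repr a) := by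
    intro a
    have ha : a ∈ Submodule.span F (Set.range (fun k : ℕ => l ^ k)) := by rw [hs]; trivial
    induction ha using Submodule.span_induction with
    | mem x hx => obtain ⟨k, rfl⟩ := hx; exact hk k
    | zero => simp
    | add x y _ _ hx hy => rw [map_add, Finsupp.coe_add, Matrix.mulVec_add, Matrix.mulVec_add, hx, hy]
    | smul c x _ hx => rw [map_smul, Finsupp.coe_smul, Matrix.mulVec_smul, Matrix.mulVec_smul, hx]
  apply Matrix.toLin'.injective
  apply LinearMap.ext
  intro v
  rw [Matrix.toLin'_apply, Matrix.toLin'_apply]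
  have := hall (b.equivFun.symm v)
  have e : (b.repr (b.equivFun.symm v) : Fin n → F) = v := by
    rw [← Module.Basis.equivFun_apply, LinearEquiv.apply_symm_apply]
  rwa [e] at this

lemma charpoly_conj_aux (g : Matrix.GeneralLinearGroup (Fin n) F) (m : Matrix (Fin n) (Fin n) F) :
    ((g : Matrix (Fin n) (Fin n) F) * m *
      ((g⁻¹ : Matrix.GeneralLinearGroup (Fin n) F) : Matrix (Fin n) (Fin n) F)).charpoly = m.charpoly := by
  rw [Matrix.mul_assoc, Matrix.charpoly_mul_comm, Matrix.mul_assoc]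
  have : ((g⁻¹ : Matrix.GeneralLinearGroup (Fin n) F) : Matrix (Fin n) (Fin n) F) * (g : Matrix (Fin n) (Fin n) F) = 1 :=
    Units.inv_mul g
  rw [this, Matrix.mul_one]

/-- the good first elements -/
def GX1 (b : Module.Basis (Fin n) F L) (x : Matrix.SpecialLinearGroup (Fin n) F) : Prop :=
  ∃ l : L, ∃ g g' : Matrix (Fin n) (Fin n) F, g * g' = 1 ∧ HTT F n l ∧
    (x : Matrix (Fin n) (Fin n) F) = g * Algebra.leftMulMatrix b l * g'

set_option maxHeartbeats 800000 in
lemma count_x1 [Finite L] (hn : 0 < n) (b : Module.Basis (Fin n) F L)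
    (hc : Fintype.card F ^ (n-1) ≤ 2 * Nat.card {l : L // Algebra.norm F l = 1 ∧ HTT F n l}) :
    Nat.card (Matrix.SpecialLinearGroup (Fin n) F) ≤ 4 * n *
      Nat.card {x : Matrix.SpecialLinearGroup (Fin n) F // GX1 b x} := by
  classical
  have hfr : Module.finrank F L = n := by rw [Module.finrank_eq_card_basis b, Fintype.card_fin]
  let _ : Fintype L := Fintype.ofFinite L
  let Λ := {l : L // Algebra.norm F l = 1 ∧ HTT F n l}
  let GLn := Matrix.GeneralLinearGroup (Fin n) F
  let Y := {x : Matrix.SpecialLinearGroup (Fin n) F // GX1 b x}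
  let _ : Fintype GLn := Fintype.ofFinite GLn
  let _ : Fintype Y := Fintype.ofFinite Y
  have hgg : ∀ g : GLn, (g : Matrix (Fin n) (Fin n) F) * ((g⁻¹ : GLn) : Matrix (Fin n) (Fin n) F) = 1 :=
    fun g => Units.mul_inv g
  have hgg' : ∀ g : GLn, ((g⁻¹ : GLn) : Matrix (Fin n) (Fin n) F) * (g : Matrix (Fin n) (Fin n) F) = 1 :=
    fun g => Units.inv_mul g
  let f : GLn × Λ → Y := fun p => ⟨⟨(p.1 : Matrix (Fin n) (Fin n) F) * Algebra.leftMulMatrix b p.2.1 *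
      ((p.1⁻¹ : GLn) : Matrix (Fin n) (Fin n) F), by
        rw [Matrix.det_mul, mul_comm, ← Matrix.det_mul, ← Matrix.mul_assoc, hgg', Matrix.one_mul,
          ← Algebra.norm_eq_matrix_det b]
        exact p.2.2.1⟩, ⟨p.2.1, p.1, ((p.1⁻¹ : GLn) : Matrix (Fin n) (Fin n) F), hgg _, p.2.2.2, rfl⟩⟩
  have hfv : ∀ p : GLn × Λ, (((f p).1 : Matrix.SpecialLinearGroup (Fin n) F) : Matrix (Fin n) (Fin n) F) =
    (p.1 : Matrix (Fin n) (Fin n) F) * Algebra.leftMulMatrix b p.2.1 *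
      ((p.1⁻¹ : GLn) : Matrix (Fin n) (Fin n) F) := fun p => rfl
  have hf : ∀ p : GLn × Λ, (p.1 : Matrix (Fin n) (Fin n) F) * Algebra.leftMulMatrix b p.2.1 =
      (((f p).1 : Matrix.SpecialLinearGroup (Fin n) F) : Matrix (Fin n) (Fin n) F) * p.1 := by
    intro p
    change _ = (p.1 : Matrix (Fin n) (Fin n) F) * Algebra.leftMulMatrix b p.2.1 *
      ((p.1⁻¹ : GLn) : Matrix (Fin n) (Fin n) F) * p.1
    rw [Matrix.mul_assoc _ _ (p.1 : Matrix (Fin n) (Fin n) F), hgg', Matrix.mul_one]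
  have hmain : (Finset.univ : Finset (GLn × Λ)).card ≤ (n * Fintype.card F ^ n) * (Finset.univ : Finset Y).card := by
    apply Finset.card_le_mul_card_image_of_maps_to (f := f) (fun _ _ => Finset.mem_univ _)
    intro y _
    let χ := (y.1 : Matrix (Fin n) (Fin n) F).charpoly.map (algebraMap F L)
    have hχ : χ ≠ 0 := ((Matrix.charpoly_monic _).map _).ne_zero
    have h1 : (Finset.univ.filter (fun p => f p = y)).card ≤
        (χ.roots.toFinset ×ˢ (Finset.univ : Finset (Fin n → F))).card := by
      apply Finset.card_le_card_of_injOn (fun p => (p.2.1, (p.1 : Matrix (Fin n) (Fin n) F).mulVec (b.repr 1)))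
      · rintro p hp
        have hp2 : f p = y := (Finset.mem_filter.1 hp).2
        rw [Finset.mem_coe, Finset.mem_product]
        refine ⟨?_, Finset.mem_univ _⟩
        rw [Multiset.mem_toFinset, Polynomial.mem_roots hχ, Polynomial.IsRoot, Polynomial.eval_map,
          ← Polynomial.aeval_def]
        have e1 : (y.1 : Matrix (Fin n) (Fin n) F).charpoly = (Algebra.leftMulMatrix b p.2.1).charpoly := by
          rw [← hp2, hfv]
          exact charpoly_conj_aux p.1 _
        rw [e1]
        apply Algebra.leftMulMatrix_injective b
        rw [map_zero, ← Polynomial.aeval_algHom_apply]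
        exact Matrix.aeval_self_charpoly _
      · intro p hp p' hp' he
        have hp2 : f p = y := (Finset.mem_filter.1 (Finset.mem_coe.1 hp)).2
        have hp2' : f p' = y := (Finset.mem_filter.1 (Finset.mem_coe.1 hp')).2
        have he1 := congrArg Prod.fst he
        have he2 := congrArg Prod.snd he
        simp only at he1 he2
        have k1 := hf p
        have k2 := hf p'
        rw [hp2] at k1
        rw [hp2', ← he1] at k2
        have := det_inj b p.2.1 (span_pow_top hn hfr _ p.2.2.2) _ _ _ k1 k2 he2
        exact Prod.ext (Units.ext this) (Subtype.ext he1)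
    refine h1.trans ?_
    rw [Finset.card_product, Finset.card_univ, Fintype.card_fun, Fintype.card_fin]
    apply Nat.mul_le_mul_right
    refine (Multiset.toFinset_card_le _).trans ((Polynomial.card_roots' _).trans ?_)
    rw [Polynomial.natDegree_map, Matrix.charpoly_natDegree_eq_dim, Fintype.card_fin]
  rw [Finset.card_univ, Finset.card_univ, Fintype.card_prod, ← Nat.card_eq_fintype_card (α := GLn),
    ← Nat.card_eq_fintype_card (α := Λ), ← Nat.card_eq_fintype_card (α := Y), card_GL_eq hn] at hmain
  change _ ≤ 4 * n * Nat.card Y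
  change _ ≤ 2 * Nat.card Λ at hc
  have hq : 1 < Fintype.card F := Fintype.one_lt_card
  generalize Nat.card Y = y at *
  generalize Nat.card Λ = m at *
  generalize Nat.card (Matrix.SpecialLinearGroup (Fin n) F) = s at *
  generalize Fintype.card F = q at *
  have : q ^ n * s ≤ q ^ n * (4 * n * y) := by
    calc q ^ n * s = q * s * q ^ (n-1) := by
          obtain ⟨k, rfl⟩ : ∃ k, n = k + 1 := ⟨n - 1, by omega⟩
          simp only [Nat.add_sub_cancel]; ring
      _ ≤ (2 * (q-1)) * s * (2 * m) := by
          gcongr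
          omega
      _ = 4 * ((q-1) * s * m) := by ring
      _ ≤ 4 * (n * q ^ n * y) := by gcongr
      _ = _ := by ring
  exact Nat.le_of_mul_le_mul_left this (by positivity)

end cnt1b

lemma two_trans_count {G X : Type*} [Group G] [Fintype G] [MulAction G X] [Fintype X] [Nonempty X]
    (h2 : MulAction.IsMultiplyPretransitive G X 2) :
    Fintype.card G ≤ 2 * Nat.card {g : G // ∃ x : X, g • x = x} := by
  classical
  let f : G → ℕ := fun g => Fintype.card (MulAction.fixedBy X g)
  let _ : Fintype (MulAction.orbitRel.Quotient G X) := Fintype.ofFinite _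
  let _ : Fintype (MulAction.orbitRel.Quotient G (X × X)) := Fintype.ofFinite _
  have b1 : ∑ g, f g = Fintype.card (MulAction.orbitRel.Quotient G X) * Fintype.card G :=
    MulAction.sum_card_fixedBy_eq_card_orbits_mul_card_group G X
  have b2 : ∑ g : G, Fintype.card (MulAction.fixedBy (X × X) g) =
      Fintype.card (MulAction.orbitRel.Quotient G (X × X)) * Fintype.card G :=
    MulAction.sum_card_fixedBy_eq_card_orbits_mul_card_group G (X × X)
  have e1 : 1 ≤ Fintype.card (MulAction.orbitRel.Quotient G X) := by
    apply Fintype.card_pos_iff.2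
    exact ⟨Quotient.mk'' (Classical.arbitrary X)⟩
  have e2 : Fintype.card (MulAction.orbitRel.Quotient G (X × X)) ≤ 2 := by
    rw [← Fintype.card_bool]
    apply Fintype.card_le_of_injective (fun ω : MulAction.orbitRel.Quotient G (X × X) =>
      decide ((Quotient.out ω).1 = (Quotient.out ω).2))
    intro ω ω' h
    simp only [decide_eq_decide] at h
    rw [← Quotient.out_eq ω, ← Quotient.out_eq ω']
    apply Quotient.sound
    change (MulAction.orbitRel G (X × X)) _ _
    rw [MulAction.orbitRel_apply, MulAction.mem_orbit_iff]
    generalize Quotient.out ω = p at *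
    generalize Quotient.out ω' = p' at *
    obtain ⟨x, y⟩ := p
    obtain ⟨x', y'⟩ := p'
    simp only at h
    by_cases hxy : x = y
    · have hxy' := h.1 hxy
      subst hxy
      subst hxy'
      have := MulAction.isPretransitive_of_is_two_pretransitive (G := G) (α := X)
      obtain ⟨g, hg⟩ := MulAction.exists_smul_eq G x' x
      exact ⟨g, by rw [Prod.smul_mk, hg]⟩
    · have hxy' : x' ≠ y' := fun hh => hxy (h.2 hh)
      obtain ⟨g, hg, hg'⟩ := MulAction.is_two_pretransitive_iff.1 h2 hxy' hxy
      exact ⟨g, by rw [Prod.smul_mk, hg, hg']⟩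
  have e3 : ∀ g : G, Fintype.card (MulAction.fixedBy (X × X) g) = f g ^ 2 := by
    intro g
    rw [sq, ← Fintype.card_prod]
    apply Fintype.card_congr
    refine ⟨fun p => (⟨p.1.1, congrArg Prod.fst p.2⟩, ⟨p.1.2, congrArg Prod.snd p.2⟩),
      fun p => ⟨(p.1.1, p.2.1), Prod.ext p.1.2 p.2.2⟩, fun p => rfl, fun p => rfl⟩
  simp only [e3] at b2
  let S := Finset.univ.filter (fun g : G => ∃ x : X, g • x = x)
  have hS : ∑ g, f g = ∑ g ∈ S, f g := by
    symm
    apply Finset.sum_subset (Finset.subset_univ _)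
    intro g _ hg
    apply Fintype.card_eq_zero_iff.2
    constructor
    rintro ⟨x, hx⟩
    exact hg (Finset.mem_filter.2 ⟨Finset.mem_univ _, x, hx⟩)
  have hCS : (∑ g ∈ S, f g) ^ 2 ≤ S.card * ∑ g ∈ S, f g ^ 2 := sq_sum_le_card_mul_sum_sq
  have hle : ∑ g ∈ S, f g ^ 2 ≤ ∑ g, f g ^ 2 :=
    Finset.sum_le_sum_of_subset (Finset.subset_univ _)
  have hSc : Nat.card {g : G // ∃ x : X, g • x = x} = S.card := by
    rw [Nat.card_eq_fintype_card, Fintype.card_subtype]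
  rw [hSc]
  have hG : 0 < Fintype.card G := Fintype.card_pos
  generalize Fintype.card G = N at *
  have k1 : N ≤ ∑ g ∈ S, f g := by
    rw [← hS, b1]; exact Nat.le_mul_of_pos_left _ e1
  have k2 : ∑ g ∈ S, f g ^ 2 ≤ 2 * N := by
    refine hle.trans ?_
    rw [b2]; exact Nat.mul_le_mul_right _ e2
  have k3 : N * N ≤ (2 * S.card) * N := by
    calc N * N ≤ (∑ g ∈ S, f g) ^ 2 := by rw [sq]; exact Nat.mul_le_mul k1 k1
      _ ≤ S.card * (2 * N) := hCS.trans (Nat.mul_le_mul_left _ k2)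
      _ = _ := by ring
  exact Nat.le_of_mul_le_mul_right k3 hG

section cnt2
variable {F : Type*} [Field F] [Fintype F] {n : ℕ}

lemma count_ev (hn : 0 < n) : Nat.card (Matrix.SpecialLinearGroup (Fin n) F) ≤
    2 * Nat.card {x : Matrix.SpecialLinearGroup (Fin n) F // HasEv (x : Matrix (Fin n) (Fin n) F)} := by
  classical
  let _ : Fintype (Projectivization F (Fin n → F)) := Fintype.ofFinite _
  have : Nonempty (Fin n) := ⟨⟨0, hn⟩⟩
  have hne : Nonempty (Projectivization F (Fin n → F)) :=
    ⟨Projectivization.mk F (fun _ => 1) (fun h => one_ne_zero (congrFun h ⟨0, hn⟩))⟩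
  have h := two_trans_count (G := Matrix.SpecialLinearGroup (Fin n) F)
    (X := Projectivization F (Fin n → F)) inferInstance
  rw [Nat.card_eq_fintype_card]
  refine h.trans (Nat.mul_le_mul_left _ ?_)
  apply Nat.card_mono (Set.toFinite _)
  rintro g ⟨p, hp⟩
  induction p using Projectivization.ind with
  | h v hv =>
    rw [Projectivization.smul_mk, Projectivization.mk_eq_mk_iff'] at hp
    obtain ⟨a, ha⟩ := hp
    exact ⟨v, hv, a, ha.symm⟩

lemma td_pow {K : Type*} [Field K] (k : ℕ) (i j : Fin n) :
    (((Matrix.mvPolynomialX (Fin n) (Fin n) K) ^ k) i j).totalDegree ≤ k := by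
  classical
  induction k generalizing i j with
  | zero =>
    rw [pow_zero, Matrix.one_apply]
    split_ifs <;> simp
  | succ k ih =>
    rw [pow_succ, Matrix.mul_apply]
    apply MvPolynomial.totalDegree_finsetSum_le
    intro l _
    refine (MvPolynomial.totalDegree_mul _ _).trans ?_
    refine Nat.add_le_add (ih _ _) ?_
    rw [Matrix.mvPolynomialX_apply]
    exact (MvPolynomial.totalDegree_X _).le

lemma td_det {K σ : Type*} [Field K] (M : Matrix (Fin n) (Fin n) (MvPolynomial σ K)) (d : ℕ)
    (h : ∀ i j, (M i j).totalDegree ≤ d) : M.det.totalDegree ≤ n * d := by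
  rw [Matrix.det_apply]
  apply MvPolynomial.totalDegree_finsetSum_le
  intro s _
  have : (∏ i, M (s i) i).totalDegree ≤ n * d := by
    refine (MvPolynomial.totalDegree_finsetProd _ _).trans ?_
    refine (Finset.sum_le_card_nsmul _ _ d (fun i _ => h _ _)).trans ?_
    simp
  rcases Int.units_eq_one_or (Equiv.Perm.sign s) with h1 | h1
  · rw [h1, one_smul]; exact this
  · rw [h1, Units.neg_smul, one_smul, MvPolynomial.totalDegree_neg]; exact this

/-- Krylov matrix with all ones vector -/
def KM {R : Type*} [CommRing R] (x : Matrix (Fin n) (Fin n) R) : Matrix (Fin n) (Fin n) R :=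
  Matrix.of fun j => Matrix.vecMul (fun _ => 1) ((x ^ n.factorial) ^ (j : ℕ))

lemma KM_map {R S : Type*} [CommRing R] [CommRing S] (f : R →+* S) (x : Matrix (Fin n) (Fin n) R) :
    (KM x).map f = KM (x.map f) := by
  ext i j
  have h : (x.map f ^ n.factorial) ^ (i : ℕ) = ((x ^ n.factorial) ^ (i : ℕ)).map f := by
    have : ∀ y : Matrix (Fin n) (Fin n) R, y.map f = f.mapMatrix y := fun y => rfl
    rw [this, this, map_pow, map_pow]
  simp only [KM, Matrix.map_apply, Matrix.of_apply, h]
  rw [RingHom.map_vecMul]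
  simp [Function.comp_def]

lemma kry_of_det (x : Matrix (Fin n) (Fin n) F)
    (h : (KM (x.map (algebraMap F (AlgebraicClosure F)))).det ≠ 0) : Kry x := by
  refine ⟨fun _ => 1, fun w hw => ?_⟩
  apply Matrix.eq_zero_of_mulVec_eq_zero h
  ext j
  have := hw (j : ℕ)
  rw [Matrix.dotProduct_mulVec] at this
  exact this

lemma exists_KM_ne {K : Type*} [Field K] [IsAlgClosed K] :
    ∃ x : Matrix (Fin n) (Fin n) K, (KM x).det ≠ 0 := by
  have : Infinite K := IsAlgClosed.instInfinite
  let a : Fin n → K := fun i => Infinite.natEmbedding K i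
  have ha : Function.Injective a := fun i j h => Fin.ext ((Infinite.natEmbedding K).injective h)
  choose t ht using fun i => IsAlgClosed.exists_pow_nat_eq (a i) (Nat.factorial_pos n)
  refine ⟨Matrix.diagonal t, ?_⟩
  have : KM (Matrix.diagonal t) = (Matrix.vandermonde a).transpose := by
    ext j i
    simp only [KM, Matrix.of_apply, Matrix.transpose_apply, Matrix.vandermonde_apply,
      Matrix.diagonal_pow, Matrix.vecMul_diagonal, one_mul, Pi.pow_apply, ht]
  rw [this, Matrix.det_transpose]
  exact Matrix.det_vandermonde_ne_zero_iff.2 ha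

lemma Kry_of_smul {c : F} {x : Matrix (Fin n) (Fin n) F} (h : Kry (c • x)) : Kry x := by
  obtain ⟨e, he⟩ := h
  refine ⟨e, fun w hw => he w fun j => ?_⟩
  have e1 : (c • x).map (algebraMap F (AlgebraicClosure F)) =
      (algebraMap F (AlgebraicClosure F) c) • (x.map (algebraMap F (AlgebraicClosure F))) := by
    ext i j
    simp
  rw [e1, smul_pow, smul_pow, Matrix.smul_mulVec, dotProduct_smul, hw j, smul_zero]

lemma count_bad (hn : 0 < n) : Nat.card {m : Fin n × Fin n → F // ¬ Kry (Matrix.of fun i j => m (i, j))} ≤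
    (n * (n.factorial * n)) * Fintype.card F ^ (n * n - 1) := by
  classical
  let K := AlgebraicClosure F
  have : Nonempty (Fin n × Fin n) := ⟨(⟨0, hn⟩, ⟨0, hn⟩)⟩
  let P : MvPolynomial (Fin n × Fin n) K := (KM (Matrix.mvPolynomialX (Fin n) (Fin n) K)).det
  have heval : ∀ x : Matrix (Fin n) (Fin n) K, MvPolynomial.eval (fun ij => x ij.1 ij.2) P = (KM x).det := by
    intro x
    simp only [P]
    rw [RingHom.map_det, RingHom.mapMatrix_apply, KM_map]
    congr 2
    ext i j
    simp
  have hP : P ≠ 0 := by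
    obtain ⟨x, hx⟩ := exists_KM_ne (n := n) (K := K)
    intro h0
    apply hx
    rw [← heval, h0, map_zero]
  have hdeg : P.totalDegree ≤ n * (n.factorial * n) := by
    apply td_det
    intro j i
    simp only [KM, Matrix.of_apply, Matrix.vecMul, dotProduct, one_mul]
    apply MvPolynomial.totalDegree_finsetSum_le
    intro l _
    rw [← pow_mul]
    exact (td_pow _ _ _).trans (Nat.mul_le_mul_left _ j.2.le)
  by_contra hcon
  push Not at hcon
  rw [Nat.card_eq_fintype_card, Fintype.card_subtype] at hcon
  refine hP (sz_gen (F := F) P _ hdeg _ (by simpa using hcon) ?_)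
  intro m hm
  have hm2 := (Finset.mem_filter.1 hm).2
  by_contra hne
  apply hm2
  apply kry_of_det
  rw [← heval]
  exact hne

lemma count_bad_SL (hn : 0 < n) : (Fintype.card F - 1) * Nat.card {x : Matrix.SpecialLinearGroup (Fin n) F //
      ¬ Kry (x : Matrix (Fin n) (Fin n) F)} ≤
    n * ((n * (n.factorial * n)) * Fintype.card F ^ (n * n - 1)) := by
  classical
  refine le_trans ?_ (Nat.mul_le_mul_left n (count_bad (F := F) hn))
  let Z := {x : Matrix.SpecialLinearGroup (Fin n) F // ¬ Kry (x : Matrix (Fin n) (Fin n) F)}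
  let W := {m : Fin n × Fin n → F // ¬ Kry (Matrix.of fun i j => m (i, j))}
  let _ : Fintype Z := Fintype.ofFinite Z
  let _ : Fintype W := Fintype.ofFinite W
  let f : Fˣ × Z → W := fun p => ⟨fun ij => (p.1 : F) * (p.2.1 : Matrix (Fin n) (Fin n) F) ij.1 ij.2, fun h =>
    p.2.2 (Kry_of_smul (c := (p.1 : F)) h)⟩
  have hdet : ∀ p : Fˣ × Z, (Matrix.of fun i j => (f p).1 (i, j)).det = (p.1 : F) ^ n := by
    intro p
    have : (Matrix.of fun i j => (f p).1 (i, j)) = (p.1 : F) • (p.2.1 : Matrix (Fin n) (Fin n) F) := by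
      ext i j
      rfl
    rw [this, Matrix.det_smul, Fintype.card_fin, Matrix.SpecialLinearGroup.det_coe, mul_one]
  have hmain : (Finset.univ : Finset (Fˣ × Z)).card ≤ n * (Finset.univ : Finset W).card := by
    apply Finset.card_le_mul_card_image_of_maps_to (f := f) (fun _ _ => Finset.mem_univ _)
    intro y _
    have h1 : (Finset.univ.filter (fun p => f p = y)).card ≤
        (Polynomial.nthRoots n ((Matrix.of fun i j => y.1 (i, j)).det)).toFinset.card := by
      apply Finset.card_le_card_of_injOn (fun p => (p.1 : F))
      · rintro p hp
        have hp2 : f p = y := (Finset.mem_filter.1 hp).2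
        rw [Finset.mem_coe, Multiset.mem_toFinset, Polynomial.mem_nthRoots hn, ← hp2, hdet]
      · rintro ⟨c, z⟩ hp ⟨c', z'⟩ hp' he
        have hp2 : f (c, z) = y := (Finset.mem_filter.1 (Finset.mem_coe.1 hp)).2
        have hp2' : f (c', z') = y := (Finset.mem_filter.1 (Finset.mem_coe.1 hp')).2
        have hc : c = c' := Units.ext he
        subst hc
        have e := congrArg Subtype.val (hp2.trans hp2'.symm)
        refine Prod.ext rfl (Subtype.ext (Subtype.ext ?_))
        ext i j
        exact mul_left_cancel₀ c.ne_zero (congrFun e (i, j))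
    exact h1.trans ((Multiset.toFinset_card_le _).trans (Polynomial.card_nthRoots n _))
  rwa [Finset.card_univ, Finset.card_univ, Fintype.card_prod, Fintype.card_units,
    ← Nat.card_eq_fintype_card (α := Z), ← Nat.card_eq_fintype_card (α := W)] at hmain

lemma card_GL_ge : Fintype.card F ^ (n * n) ≤ 2 ^ n * Nat.card (Matrix.GeneralLinearGroup (Fin n) F) := by
  rw [Matrix.card_GL_field]
  have hq : 2 ≤ Fintype.card F := Fintype.one_lt_card
  generalize Fintype.card F = q at *
  have e : ∀ k : ℕ, (2:ℕ) ^ n * k = (∏ i : Fin n, 2) * k := by intro k; simp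
  rw [e, ← Finset.prod_mul_distrib]
  have : q ^ (n * n) = ∏ i : Fin n, q ^ n := by
    simp [pow_mul]
  rw [this]
  apply Finset.prod_le_prod' 
  intro i _
  have h1 : 2 * q ^ (i : ℕ) ≤ q ^ n := by
    calc 2 * q ^ (i : ℕ) ≤ q * q ^ (i : ℕ) := Nat.mul_le_mul_right _ hq
      _ = q ^ ((i : ℕ) + 1) := by ring
      _ ≤ q ^ n := Nat.pow_le_pow_right (by omega) i.2
  omega

lemma count_x2 (hn : 0 < n) (hq : 4 * n * (n * (n.factorial * n)) * 2 ^ n ≤ Fintype.card F) :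
    Nat.card (Matrix.SpecialLinearGroup (Fin n) F) ≤
    4 * Nat.card {x : Matrix.SpecialLinearGroup (Fin n) F // HasEv (x : Matrix (Fin n) (Fin n) F) ∧
      Kry (x : Matrix (Fin n) (Fin n) F)} := by
  classical
  have h1 := count_ev (F := F) hn
  have h2 := count_bad_SL (F := F) hn
  have h3 := card_GL_ge (F := F) (n := n)
  rw [card_GL_eq hn] at h3
  have hq1 : 1 < Fintype.card F := Fintype.one_lt_card
  let _ : Fintype (Matrix.SpecialLinearGroup (Fin n) F) := Fintype.ofFinite _
  have h4 : Nat.card {x : Matrix.SpecialLinearGroup (Fin n) F // HasEv (x : Matrix (Fin n) (Fin n) F)} ≤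
      Nat.card {x : Matrix.SpecialLinearGroup (Fin n) F // HasEv (x : Matrix (Fin n) (Fin n) F) ∧
      Kry (x : Matrix (Fin n) (Fin n) F)} + Nat.card {x : Matrix.SpecialLinearGroup (Fin n) F //
      ¬ Kry (x : Matrix (Fin n) (Fin n) F)} := by
    simp only [Nat.card_eq_fintype_card, Fintype.card_subtype]
    rw [← Finset.card_union_of_disjoint]
    · apply Finset.card_le_card
      intro x hx
      have := (Finset.mem_filter.1 hx).2
      rw [Finset.mem_union, Finset.mem_filter, Finset.mem_filter]
      by_cases hk : Kry (x : Matrix (Fin n) (Fin n) F)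
      · exact Or.inl ⟨Finset.mem_univ _, this, hk⟩
      · exact Or.inr ⟨Finset.mem_univ _, hk⟩
    · rw [Finset.disjoint_filter]
      intro x _ hx hk
      exact hk hx.2
  generalize Nat.card {x : Matrix.SpecialLinearGroup (Fin n) F // ¬ Kry (x : Matrix (Fin n) (Fin n) F)} = z at *
  have h5 : 4 * z ≤ Nat.card (Matrix.SpecialLinearGroup (Fin n) F) := by
    generalize Nat.card (Matrix.SpecialLinearGroup (Fin n) F) = s at *
    generalize Fintype.card F = q at *
    generalize (n * (n.factorial * n)) = D at *
    have h6 : 2 ^ n * (q - 1) * (4 * z) ≤ 2 ^ n * (q - 1) * s := by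
      calc 2 ^ n * (q - 1) * (4 * z) = 2 ^ n * 4 * ((q - 1) * z) := by ring
        _ ≤ 2 ^ n * 4 * (n * (D * q ^ (n * n - 1))) := Nat.mul_le_mul_left _ h2
        _ = (4 * n * D * 2 ^ n) * q ^ (n * n - 1) := by ring
        _ ≤ q * q ^ (n * n - 1) := Nat.mul_le_mul_right _ hq
        _ = q ^ (n * n) := by
          rw [← pow_succ']
          congr 1
          have : 0 < n * n := by positivity
          omega
        _ ≤ 2 ^ n * ((q - 1) * s) := h3
        _ = _ := by ring
    have : 0 < q - 1 := by omega
    exact Nat.le_of_mul_le_mul_left h6 (by positivity)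
  omega

end cnt2

theorem pair_invGen {F L : Type} [Field F] [Fintype F] [Field L] [Algebra F L] [FiniteDimensional F L]
    {n : ℕ} (hn : 0 < n) (b : Module.Basis (Fin n) F L) (hq : 100 ≤ Fintype.card F)
    (x1 x2 : Matrix.SpecialLinearGroup (Fin n) F) (h1 : GX1 b x1)
    (hev : HasEv (x2 : Matrix (Fin n) (Fin n) F)) (hkr : Kry (x2 : Matrix (Fin n) (Fin n) F)) :
    InvGen x1 x2 := by
  intro g h
  obtain ⟨l, u, u', hu, hT, hx⟩ := h1
  have hmul : ∀ k : Matrix.SpecialLinearGroup (Fin n) F, (k : Matrix (Fin n) (Fin n) F) *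
      ((k⁻¹ : Matrix.SpecialLinearGroup (Fin n) F) : Matrix (Fin n) (Fin n) F) = 1 := by
    intro k
    rw [← Matrix.SpecialLinearGroup.coe_mul, mul_inv_cancel, Matrix.SpecialLinearGroup.coe_one]
  refine gen_of_good hn b l ((g : Matrix (Fin n) (Fin n) F) * u)
    (u' * ((g⁻¹ : Matrix.SpecialLinearGroup (Fin n) F) : Matrix (Fin n) (Fin n) F)) ?_
    (g * x1 * g⁻¹) (h * x2 * h⁻¹) ?_ ?_ ?_ hq hT _ ?_ ?_
  · calc (g : Matrix (Fin n) (Fin n) F) * u * (u' * ((g⁻¹ : Matrix.SpecialLinearGroup (Fin n) F) : Matrix (Fin n) (Fin n) F))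
        = (g : Matrix (Fin n) (Fin n) F) * (u * u') * ((g⁻¹ : Matrix.SpecialLinearGroup (Fin n) F) : Matrix (Fin n) (Fin n) F) := by
          simp only [Matrix.mul_assoc]
      _ = 1 := by rw [hu, Matrix.mul_one, hmul]
  · rw [Matrix.SpecialLinearGroup.coe_mul, Matrix.SpecialLinearGroup.coe_mul, hx]
    simp only [Matrix.mul_assoc]
  · rw [Matrix.SpecialLinearGroup.coe_mul, Matrix.SpecialLinearGroup.coe_mul]
    exact hev.conj (hmul h)
  · rw [Matrix.SpecialLinearGroup.coe_mul, Matrix.SpecialLinearGroup.coe_mul]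
    exact hkr.conj (hmul h)
  · exact Subgroup.subset_closure (Set.mem_insert _ _)
  · exact Subgroup.subset_closure (Set.mem_insert_of_mem _ (Set.mem_singleton _))

theorem main_count (n : ℕ) (hn : 0 < n) : ∃ q0 : ℕ, ∀ (F : Type) [Field F] [Fintype F], q0 ≤ Fintype.card F →
    Nat.card (Matrix.SpecialLinearGroup (Fin n) F) ^ 2 ≤ 16 * n *
      Nat.card {p : Matrix.SpecialLinearGroup (Fin n) F × Matrix.SpecialLinearGroup (Fin n) F //
        InvGen p.1 p.2} := by
  obtain ⟨q1, hq1⟩ := good_count n hn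
  refine ⟨q1 + 4 * n * (n * (n.factorial * n)) * 2 ^ n + 100, ?_⟩
  intro F _ _ hq
  obtain ⟨p, hp⟩ := CharP.exists F
  have hpp : Fact p.Prime := ⟨CharP.char_is_prime F p⟩
  have : NeZero n := ⟨hn.ne'⟩
  let L := FiniteField.Extension F p n
  have hfr : Module.finrank F L = n := FiniteField.finrank_extension F p n
  have hfd : FiniteDimensional F L := inferInstance
  have hfin : Finite L := Module.finite_of_finite F
  let b : Module.Basis (Fin n) F L := Module.finBasisOfFinrankEq F L hfr
  have c1 := count_x1 hn b (hq1 F L hfr (by omega))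
  have c2 := count_x2 (F := F) hn (by omega)
  let Y := {x : Matrix.SpecialLinearGroup (Fin n) F // GX1 b x}
  let Z := {x : Matrix.SpecialLinearGroup (Fin n) F // HasEv (x : Matrix (Fin n) (Fin n) F) ∧
      Kry (x : Matrix (Fin n) (Fin n) F)}
  have c3 : Nat.card (Y × Z) ≤ Nat.card {p : Matrix.SpecialLinearGroup (Fin n) F × Matrix.SpecialLinearGroup (Fin n) F //
        InvGen p.1 p.2} := by
    refine Nat.card_le_card_of_injective (fun r : Y × Z => ⟨(r.1.1, r.2.1),
      pair_invGen hn b (by omega) r.1.1 r.2.1 r.1.2 r.2.2.1 r.2.2.2⟩) ?_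
    intro r r' h
    have h' := congrArg Subtype.val h
    exact Prod.ext (Subtype.ext (congrArg Prod.fst h')) (Subtype.ext (congrArg Prod.snd h'))
  rw [Nat.card_prod] at c3
  calc _ = Nat.card (Matrix.SpecialLinearGroup (Fin n) F) * Nat.card (Matrix.SpecialLinearGroup (Fin n) F) := sq _
    _ ≤ (4 * n * Nat.card Y) * (4 * Nat.card Z) := Nat.mul_le_mul c1 c2
    _ = 16 * n * (Nat.card Y * Nat.card Z) := by ring
    _ ≤ _ := Nat.mul_le_mul_left _ c3

theorem stmt_8 :
    ∃ c : ℝ, 0 < c ∧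
      ∀ n : ℕ, 2 ≤ n →
        ∃ C : ℝ, 0 < C ∧
          ∀ (F : Type) [Field F] [Fintype F],
            (Nat.card {p : Matrix.SpecialLinearGroup (Fin n) F ×
                Matrix.SpecialLinearGroup (Fin n) F // InvGen p.1 p.2} : ℝ) ≥
              (c / n - C / Fintype.card F) *
                (Nat.card (Matrix.SpecialLinearGroup (Fin n) F) : ℝ) ^ 2 := by
  refine ⟨1 / 16, by norm_num, fun n hn => ?_⟩
  obtain ⟨q0, h0⟩ := main_count n (by omega)
  refine ⟨(q0 : ℝ) + 1, by positivity, ?_⟩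
  intro F _ _
  have hqp : (0 : ℝ) < Fintype.card F := by exact_mod_cast Fintype.card_pos
  have hnp : (2 : ℝ) ≤ n := by exact_mod_cast hn
  have hn1 : (1 / 16 : ℝ) / n ≤ 1 := by
    rw [div_le_one (by linarith)]
    linarith
  by_cases hq : q0 ≤ Fintype.card F
  · have h := h0 F hq
    have h' : ((Nat.card (Matrix.SpecialLinearGroup (Fin n) F) : ℝ)) ^ 2 ≤ 16 * n *
      (Nat.card {p : Matrix.SpecialLinearGroup (Fin n) F × Matrix.SpecialLinearGroup (Fin n) F //
        InvGen p.1 p.2} : ℝ) := by exact_mod_cast h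
    have hC : (0 : ℝ) ≤ ((q0 : ℝ) + 1) / Fintype.card F := by positivity
    have hk : (1 / 16 : ℝ) / n * (Nat.card (Matrix.SpecialLinearGroup (Fin n) F) : ℝ) ^ 2 ≤
      (Nat.card {p : Matrix.SpecialLinearGroup (Fin n) F × Matrix.SpecialLinearGroup (Fin n) F //
        InvGen p.1 p.2} : ℝ) := by
      rw [div_div, div_mul_eq_mul_div, one_mul, div_le_iff₀ (by positivity)]
      linarith
    refine ge_iff_le.2 (le_trans ?_ hk)
    apply mul_le_mul_of_nonneg_right _ (by positivity)
    linarith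
  · have h1 : (1 : ℝ) ≤ ((q0 : ℝ) + 1) / Fintype.card F := by
      rw [le_div_iff₀ hqp]
      have : (Fintype.card F : ℝ) ≤ q0 := by exact_mod_cast (not_le.1 hq).le
      linarith
    refine ge_iff_le.2 (le_trans (mul_nonpos_of_nonpos_of_nonneg ?_ (by positivity)) (Nat.cast_nonneg _))
    linarith
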